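/- arXiv:1608.04666 — 13 statements merged into one kernel-verified Lean document; each statement's English description precedes it below -/
import Mathlib

section
/- Let F be a field, n a positive integer, and A an n×n matrix over F. Then A is a product of two nilpotent n×n matrices over F if and only if A is singular, except when n = 2 and A is a nonzero nilpotent matrix. Precisely: A can be written as A = N₁N₂ with N₁, N₂ nilpotent n×n matrices if and only if A is not invertible and it is not the case that n = 2, A is nilpotent, and A ≠ 0. -/
/-- An endomorphism is a product of two nilpotent endomorphisms. -/
def IsNilpotentProduct {F V : Type*} [Field F] [AddCommGroup V] [Module F V]
    (f : Module.End F V) : Prop :=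
  ∃ g h : Module.End F V, IsNilpotent g ∧ IsNilpotent h ∧ f = g * h

theorem IsNilpotent.of_mul_pow_eq {R : Type*} [Ring R] {a t : R} (ht : IsNilpotent t) (j : ℕ)
    (h : a * a ^ j = t * a ^ j) : IsNilpotent a := by
  have key (i : ℕ) : a ^ (i + j) = t ^ i * a ^ j := by
    induction i with
    | zero => simp
    | succ i ih =>
      calc a ^ (i + 1 + j) = a * a ^ j * a ^ i := by
            rw [← pow_succ', ← pow_add]; congr 1; omega
        _ = t * a ^ (i + j) := by rw [h, mul_assoc, ← pow_add, add_comm j]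
        _ = t ^ (i + 1) * a ^ j := by rw [ih, pow_succ', mul_assoc]
  obtain ⟨k, hk⟩ := ht
  exact ⟨k + j, by rw [key, hk, zero_mul]⟩

theorem IsNilpotent.of_pow_mul_eq {R : Type*} [Ring R] {a t : R} (ht : IsNilpotent t) (j : ℕ)
    (h : a ^ j * a = a ^ j * t) : IsNilpotent a := by
  have key (i : ℕ) : a ^ (j + i) = a ^ j * t ^ i := by
    induction i with
    | zero => simp
    | succ i ih =>
      calc a ^ (j + (i + 1)) = a ^ i * (a ^ j * a) := by
            rw [← _root_.pow_succ, ← pow_add]; congr 1; omega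
        _ = a ^ (j + i) * t := by rw [h, ← mul_assoc, ← pow_add, add_comm j]
        _ = a ^ j * t ^ (i + 1) := by rw [ih, _root_.pow_succ, mul_assoc]
  obtain ⟨k, hk⟩ := ht
  exact ⟨j + k, by rw [key, hk, mul_zero]⟩

section LinearAlgebra

variable {F V : Type*} [Field F] [AddCommGroup V] [Module F V]

theorem Module.End.isNilpotent_comp_of_retract {W : Type*} [AddCommGroup W] [Module F W]
    {i : W →ₗ[F] V} {p : V →ₗ[F] W} (hp : ∀ w, p (i w) = w) {g : Module.End F W}
    (hg : IsNilpotent g) : IsNilpotent (i ∘ₗ g ∘ₗ p : Module.End F V) := by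
  have key (k : ℕ) : (i ∘ₗ g ∘ₗ p : Module.End F V) ^ (k + 1) = i ∘ₗ (g ^ (k + 1)) ∘ₗ p := by
    induction k with
    | zero => simp
    | succ k ih =>
      rw [pow_succ', ih, pow_succ' g (k + 1)]
      ext x
      simp [hp]
  obtain ⟨k, hk⟩ := hg
  exact ⟨k + 1, by rw [key, pow_succ, hk]; simp⟩

/-- Two nonzero vectors have a linear functional vanishing at neither. -/
theorem Module.exists_dual_ne_zero_ne_zero {v w : V} (hv : v ≠ 0) (hw : w ≠ 0) :
    ∃ φ : Module.Dual F V, φ v ≠ 0 ∧ φ w ≠ 0 := by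
  obtain ⟨α, hα⟩ : ∃ α : Module.Dual F V, α v ≠ 0 := by
    by_contra! h
    exact hv ((Module.forall_dual_apply_eq_zero_iff F v).1 h)
  obtain ⟨β, hβ⟩ : ∃ β : Module.Dual F V, β w ≠ 0 := by
    by_contra! h
    exact hw ((Module.forall_dual_apply_eq_zero_iff F w).1 h)
  by_cases hαw : α w = 0
  · by_cases hβv : β v = 0
    · exact ⟨α + β, by simpa [hβv], by simpa [hαw]⟩
    · exact ⟨β, hβv, hβ⟩
  · exact ⟨α, hα, hαw⟩

/-- An endomorphism killing a vector `k` and killed by a functional `φ` with `φ k = 1`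
is a product of two nilpotents. -/
theorem isNilpotentProduct_of_split [FiniteDimensional F V] (f : Module.End F V) (k : V)
    (φ : Module.Dual F V) (hk : f k = 0) (hφ : ∀ x, φ (f x) = 0) (hφk : φ k = 1) :
    IsNilpotentProduct f := by
  induction hd : Module.finrank F V using Nat.strong_induction_on generalizing V with
  | _ d ih =>
  by_cases hf : f = 0
  · exact ⟨0, 0, IsNilpotent.zero, IsNilpotent.zero, by simp [hf]⟩
  let W := LinearMap.ker φ
  let p : V →ₗ[F] W := (LinearMap.id - φ.smulRight k).codRestrict W (by intro x; simp [W, hφk])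
  have pcoe (x : V) : (p x : V) = x - φ x • k := rfl
  have hW (w : W) : φ w = 0 := w.2
  have hpW (w : W) : p w = w := by ext; simp [pcoe, hW]
  have hpk : p k = 0 := by ext; simp [pcoe, hφk]
  obtain ⟨v₀, hv₀⟩ : ∃ v, f v ≠ 0 := by
    by_contra! h
    exact hf (LinearMap.ext h)
  let v : W := p v₀
  have hfv : f v = f v₀ := by simp [v, pcoe, hk]
  have hv : v ≠ 0 := by
    rintro h
    apply hv₀
    rw [← hfv, h]
    simp
  let g : W →ₗ[F] W := f.restrict (fun x _ => hφ x)
  have gcoe (x : W) : (g x : V) = f x := rfl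
  have hgv : g v ≠ 0 := by
    intro h
    apply hv₀
    rw [← hfv, ← gcoe, h]
    rfl
  obtain ⟨χ, hχv, hχg⟩ := Module.exists_dual_ne_zero_ne_zero (F := F) hv hgv
  let g' : Module.End F W := g - (χ ∘ₗ g).smulRight ((χ (g v))⁻¹ • g v)
  have hlt : Module.finrank F W < d := by
    rw [← hd]
    apply Submodule.finrank_lt
    intro h
    have : k ∈ W := by rw [h]; trivial
    exact one_ne_zero (hφk.symm.trans this)
  obtain ⟨L, U, hL, hU, hLU⟩ := ih _ hlt g' v ((χ v)⁻¹ • χ) (by simp [g', hχg])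
    (by intro x; simp [g', hχg]) (by simp [hχv]) rfl
  refine ⟨W.subtype ∘ₗ L ∘ₗ p + φ.smulRight ((χ (g v))⁻¹ • (g v : V)),
    W.subtype ∘ₗ U ∘ₗ p + (χ ∘ₗ g ∘ₗ p).smulRight k,
    (Module.End.isNilpotent_comp_of_retract (i := W.subtype) hpW hL).of_mul_pow_eq 1 ?_,
    (Module.End.isNilpotent_comp_of_retract (i := W.subtype) hpW hU).of_pow_mul_eq 1 ?_, ?_⟩
  · ext x
    simp [hW]
  · ext x
    simp [hpk]
  · ext x
    have h1 : L (U (p x)) = g' (p x) := by rw [hLU]; rfl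
    have h2 : f (p x) = f x := by simp [pcoe, hk]
    simp [hpW, hpk, hW, hφk, h1, g', gcoe, h2]

/-- The case of an endomorphism of the block form with zero first column, zero last row and zero
upper right corner. -/
theorem isNilpotentProduct_of_corner [FiniteDimensional F V] (f : Module.End F V) (e e' : V)
    (φ ψ : Module.Dual F V) (he : f e = 0) (hφ : ∀ x, φ (f x) = 0) (hφe : φ e = 0)
    (hφe' : φ e' = 1) (hψe : ψ e = 1) (hψe' : ψ e' = 0) (hψf : ψ (f e') = 0) (hfe' : f e' ≠ 0)
    {x₀ : V} (hx₀ : ψ (f x₀) ≠ 0) : IsNilpotentProduct f := by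
  let W := LinearMap.ker φ ⊓ LinearMap.ker ψ
  let p : V →ₗ[F] W := (LinearMap.id - ψ.smulRight e - φ.smulRight e').codRestrict W
    (by intro x; simp [W, hφe, hφe', hψe, hψe'])
  have pcoe (x : V) : (p x : V) = x - ψ x • e - φ x • e' := rfl
  have hφW (w : W) : φ w = 0 := w.2.1
  have hψW (w : W) : ψ w = 0 := w.2.2
  have hpW (w : W) : p w = w := by ext; simp [pcoe, hφW, hψW]
  have hpe : p e = 0 := by ext; simp [pcoe, hφe, hψe]
  have hpe' : p e' = 0 := by ext; simp [pcoe, hφe', hψe']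
  let c : W := ⟨f e', hφ _, hψf⟩
  have hc : c ≠ 0 := fun h => hfe' (congrArg Subtype.val h)
  let k : W := (ψ (f x₀))⁻¹ • p x₀
  have hk : ψ (f k) = 1 := by simp [k, pcoe, he, hψf, hx₀]
  have hk0 : k ≠ 0 := by
    rintro h
    rw [h] at hk
    simp at hk
  obtain ⟨χ, hχc, hχk⟩ := Module.exists_dual_ne_zero_ne_zero (F := F) hc hk0
  let χ' : Module.Dual F W := (χ c)⁻¹ • χ
  have hχ'c : χ' c = 1 := by simp [χ', hχc]
  have hχ'k : χ' k ≠ 0 := by simp [χ', hχc, hχk]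
  clear_value χ'
  let M : Module.End F W := p ∘ₗ f ∘ₗ W.subtype
  let w : Module.Dual F V := ψ ∘ₗ f
  let M' : Module.End F W :=
    (LinearMap.id - χ'.smulRight c) ∘ₗ M ∘ₗ (LinearMap.id - (w ∘ₗ W.subtype).smulRight k)
  obtain ⟨L, U, hL, hU, hLU⟩ := isNilpotentProduct_of_split M' k ((χ' k)⁻¹ • χ')
    (by simp [M', w, hk]) (by intro x; simp [M', hχ'c]) (by simp [hχ'k])
  let z : W := M k - χ' (M k) • c
  refine ⟨W.subtype ∘ₗ L ∘ₗ p + ψ.smulRight (c : V) + φ.smulRight (e + z),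
    W.subtype ∘ₗ U ∘ₗ p + (χ' ∘ₗ M ∘ₗ p + φ).smulRight e + w.smulRight e',
    (Module.End.isNilpotent_comp_of_retract (i := W.subtype) hpW hL).of_mul_pow_eq 2 ?_,
    (Module.End.isNilpotent_comp_of_retract (i := W.subtype) hpW hU).of_pow_mul_eq 2 ?_, ?_⟩
  · ext x
    simp [pow_two, hφW, hψW, hφe, hψe]
  · ext x
    simp [pow_two, hpe, hpe', hφe, hφe', w, he, hψf]
  · ext x
    have h1 : L (U (p x)) = M' (p x) := by rw [hLU]; rfl
    have h2 : f (p x) = f x - φ x • (c : V) := by simp [pcoe, he, c]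
    have h3 : (M (p x) : V) = f x - φ x • (c : V) - ψ (f x) • e := by
      simp [M, pcoe, hφ, he, hψf, c]
      abel
    have h4 : w (p x) = w x := by simp [w, h2, hψW]
    simp [hpW, hpe, hpe', hφW, hψW, hφe, hφe', hψe, hψe', h1, M', h3, h4, z]
    simp only [w, LinearMap.comp_apply]
    module

/-- A linear functional separating a vector from a subspace, normalized. -/
theorem Submodule.exists_dual_eq_one {W : Submodule F V} {x : V} (hx : x ∉ W) :
    ∃ φ : Module.Dual F V, φ x = 1 ∧ ∀ y ∈ W, φ y = 0 := by
  obtain ⟨φ, h1, h2⟩ := Submodule.exists_le_ker_of_notMem hx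
  exact ⟨(φ x)⁻¹ • φ, by simp [h1], fun y hy => by simp [LinearMap.mem_ker.1 (h2 hy)]⟩

theorem isNilpotentProduct_or_of_not_isUnit [FiniteDimensional F V] (f : Module.End F V)
    (hf : ¬ IsUnit f) :
    IsNilpotentProduct f ∨ (Module.finrank F V = 2 ∧ IsNilpotent f ∧ f ≠ 0) := by
  have hker : LinearMap.ker f ≠ ⊥ := fun h => hf ((LinearMap.isUnit_iff_ker_eq_bot f).2 h)
  have hrange : LinearMap.range f ≠ ⊤ := fun h => hf ((LinearMap.isUnit_iff_range_eq_top f).2 h)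
  obtain ⟨e, he, he0⟩ := Submodule.exists_mem_ne_zero_of_ne_bot hker
  obtain ⟨y, hy⟩ : ∃ y, y ∉ LinearMap.range f := by
    by_contra! h
    exact hrange (Submodule.eq_top_iff'.2 h)
  obtain ⟨φ, hφy, hφ⟩ := Submodule.exists_dual_eq_one hy
  by_cases hkr : LinearMap.ker f ≤ LinearMap.range f
  swap
  · obtain ⟨k, hk, hk'⟩ := SetLike.not_le_iff_exists.1 hkr
    obtain ⟨θ, hθk, hθ⟩ := Submodule.exists_dual_eq_one hk'
    exact Or.inl (isNilpotentProduct_of_split f k θ hk (fun x => hθ _ ⟨x, rfl⟩) hθk)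
  obtain ⟨x₀, hx₀⟩ := hkr he
  by_cases h : ∃ e', φ e' = 1 ∧ f e' ∉ Submodule.span F {e}
  · obtain ⟨e', hφe', hfe'⟩ := h
    have hφe : φ e = 0 := hφ _ (hkr he)
    have hφf (x : V) : φ (f x) = 0 := hφ _ ⟨x, rfl⟩
    have hmem : e ∉ Submodule.span F {e', f e'} := by
      rw [Submodule.mem_span_pair]
      rintro ⟨a, b, hab⟩
      have ha : a = 0 := by simpa [hφe', hφf, hφe] using congrArg φ hab
      have hb : b ≠ 0 := by
        rintro rfl
        simp [ha] at hab
        exact he0 hab.symm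
      apply hfe'
      rw [Submodule.mem_span_singleton]
      exact ⟨b⁻¹, by rw [← hab, ha]; simp [hb]⟩
    obtain ⟨ψ, hψe, hψ⟩ := Submodule.exists_dual_eq_one hmem
    refine Or.inl (isNilpotentProduct_of_corner f e e' φ ψ he hφf hφe hφe' hψe
      (hψ _ (Submodule.subset_span (by simp))) (hψ _ (Submodule.subset_span (by simp))) ?_
      (x₀ := x₀) (by simp [hx₀, hψe]))
    intro h0
    apply hfe'
    simp [h0]
  · push Not at h
    have hspan (x : V) : f x ∈ Submodule.span F {e} := by
      have h1 := h y hφy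
      have h2 := h (x + (1 - φ x) • y) (by simp [hφy])
      rw [map_add, map_smul] at h2
      exact (Submodule.add_mem_iff_left _ (Submodule.smul_mem _ _ h1)).1 h2
    have hr : LinearMap.range f = Submodule.span F {e} := by
      apply le_antisymm
      · rintro _ ⟨x, rfl⟩
        exact hspan x
      · rw [Submodule.span_singleton_le_iff_mem]
        exact hkr he
    have hk : LinearMap.ker f = Submodule.span F {e} := by
      apply le_antisymm (hkr.trans hr.le)
      rwa [Submodule.span_singleton_le_iff_mem]
    refine Or.inr ⟨?_, ⟨2, ?_⟩, ?_⟩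
    · rw [← LinearMap.finrank_range_add_finrank_ker f, hr, hk, finrank_span_singleton he0]
    · ext x
      have : f x ∈ LinearMap.ker f := hk ▸ hspan x
      simpa [pow_two] using this
    · rintro rfl
      exact he0 (by simpa using hx₀.symm)

end LinearAlgebra

/-- The product of two nilpotent `2 × 2` matrices vanishes as soon as it is nilpotent. -/
theorem Matrix.mul_eq_zero_of_isNilpotent_fin_two {F : Type*} [Field F]
    {M N : Matrix (Fin 2) (Fin 2) F} (hM : IsNilpotent M) (hN : IsNilpotent N)
    (hMN : IsNilpotent (M * N)) : M * N = 0 := by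
  have tr {P : Matrix (Fin 2) (Fin 2) F} (hP : IsNilpotent P) : P 0 0 + P 1 1 = 0 := by
    rw [← Matrix.trace_fin_two]
    exact (Matrix.isNilpotent_trace_of_isNilpotent hP).eq_zero
  have dt {P : Matrix (Fin 2) (Fin 2) F} (hP : IsNilpotent P) :
      P 0 0 * P 1 1 - P 0 1 * P 1 0 = 0 := by
    rw [← Matrix.det_fin_two]
    obtain ⟨k, hk⟩ := hP
    refine IsNilpotent.eq_zero ⟨k + 1, ?_⟩
    rw [← Matrix.det_pow, pow_succ, hk, zero_mul, Matrix.det_zero]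
  have hMt : M 1 1 = -M 0 0 := by linear_combination tr hM
  have hNt : N 1 1 = -N 0 0 := by linear_combination tr hN
  have hMd := dt hM
  have hNd := dt hN
  have ht := tr hMN
  simp only [Matrix.mul_apply, Fin.sum_univ_two, hMt, hNt] at hMd hNd ht
  ext i j
  rw [Matrix.zero_apply, ← sq_eq_zero_iff]
  fin_cases i <;> fin_cases j <;>
    simp only [Fin.zero_eta, Fin.mk_one, Matrix.mul_apply, Fin.sum_univ_two, hMt, hNt]
  · linear_combination M 0 1 * N 1 0 * ht - M 0 0 ^ 2 * hNd + N 0 1 * N 1 0 * hMd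
  · linear_combination -M 0 1 * N 0 1 * ht - N 0 1 ^ 2 * hMd - M 0 1 ^ 2 * hNd
  · linear_combination -M 1 0 * N 1 0 * ht - M 1 0 ^ 2 * hNd - N 1 0 ^ 2 * hMd
  · linear_combination M 1 0 * N 0 1 * ht - M 0 0 ^ 2 * hNd + N 0 1 * N 1 0 * hMd

/-- **Theorem (Laffey/Sourour).** Over an arbitrary field `F`, an `n × n` matrix `A`
is a product of two nilpotent matrices if and only if it is singular, except when
`n = 2` and `A` is a nonzero nilpotent matrix. -/
theorem product_of_two_nilpotents_iff_singular
    (F : Type*) [Field F] (n : ℕ) (hn : 0 < n) (A : Matrix (Fin n) (Fin n) F) :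
    (∃ N₁ N₂ : Matrix (Fin n) (Fin n) F,
        IsNilpotent N₁ ∧ IsNilpotent N₂ ∧ A = N₁ * N₂) ↔
      (¬ IsUnit A ∧ ¬ (n = 2 ∧ IsNilpotent A ∧ A ≠ 0)) := by
  have : Nonempty (Fin n) := ⟨⟨0, hn⟩⟩
  constructor
  · rintro ⟨M, N, hM, hN, rfl⟩
    refine ⟨fun h => ?_, ?_⟩
    · exact hM.not_isUnit (isUnit_of_mul_isUnit_left h)
    · rintro ⟨rfl, hMN, hne⟩
      exact hne (Matrix.mul_eq_zero_of_isNilpotent_fin_two hM hN hMN)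
  · rintro ⟨hA, hne⟩
    let e : Matrix (Fin n) (Fin n) F ≃ₐ[F] Module.End F (Fin n → F) := Matrix.toLinAlgEquiv'
    rcases isNilpotentProduct_or_of_not_isUnit (e A)
      (fun h => hA ((MulEquiv.isUnit_map e).1 h)) with ⟨g, h, hg, hh, hgh⟩ | ⟨h2, hnil, h0⟩
    · exact ⟨e.symm g, e.symm h, hg.map e.symm, hh.map e.symm, by
        rw [← map_mul, ← hgh, AlgEquiv.symm_apply_apply]⟩
    · refine absurd ⟨by simpa using h2, ?_, ?_⟩ hne
      · simpa using hnil.map e.symm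
      · rintro rfl
        exact h0 (map_zero e)
end

section
/- Let F be a field, n a positive integer with n ≠ 2, and A an n×n matrix over F. If A is singular (not invertible), then there exist nilpotent n×n matrices N₁ and N₂ over F such that A = N₁N₂. -/
theorem IsNilpotent.add_of_mul_eq_zero_left {R : Type*} [Ring R] {a m : R} (hm : IsNilpotent m)
    (haa : a * a = 0) (ham : a * m = 0) : IsNilpotent (a + m) := by
  obtain ⟨k, hk⟩ := hm
  have key : ∀ j : ℕ, (a + m) ^ (j + 1) = m ^ j * (a + m) := by
    intro j
    induction j with
    | zero => simp
    | succ j ih =>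
      rw [_root_.pow_succ, ih, mul_assoc, add_mul, mul_add a a m, haa, ham, _root_.pow_succ,
        mul_assoc]
      simp
  exact ⟨k + 1, by rw [key, hk, zero_mul]⟩

theorem IsNilpotent.add_of_mul_eq_zero_right {R : Type*} [Ring R] {a m : R} (hm : IsNilpotent m)
    (haa : a * a = 0) (hma : m * a = 0) : IsNilpotent (a + m) := by
  obtain ⟨k, hk⟩ := hm
  have key : ∀ j : ℕ, (a + m) ^ (j + 1) = (a + m) * m ^ j := by
    intro j
    induction j with
    | zero => simp
    | succ j ih =>
      rw [pow_succ', ih, ← mul_assoc, mul_add, add_mul a m a, haa, hma, pow_succ', ← mul_assoc]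
      simp
  exact ⟨k + 1, by rw [key, hk, mul_zero]⟩

section

variable {K V : Type*} [Field K] [AddCommGroup V] [Module K V]

open Module

theorem Module.exists_dual_eq_one_and_ne_zero {x y : V} (hx : x ≠ 0) (hy : y ≠ 0) :
    ∃ f : V →ₗ[K] K, f x = 1 ∧ f y ≠ 0 := by
  obtain ⟨f, hf⟩ := Projective.exists_dual_eq_one K hx
  obtain ⟨g, hg⟩ := Projective.exists_dual_eq_one K hy
  by_cases hfy : f y = 0
  · by_cases hgx : 1 + g x = 0
    · refine ⟨-g, ?_, by simp [hg]⟩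
      rw [LinearMap.neg_apply]
      linear_combination -hgx
    · refine ⟨(1 + g x)⁻¹ • (f + g), ?_, by simp [hfy, hg, hgx]⟩
      rw [LinearMap.smul_apply, LinearMap.add_apply, hf, smul_eq_mul, inv_mul_cancel₀ hgx]
  · exact ⟨f, hf, hfy⟩

/-- If `A` lies in the corner `P * End V * P` of an idempotent `P` and vanishes on a line of that
corner complementary to an invariant hyperplane, then `A` is a product of two nilpotents of the
corner. -/
theorem LinearMap.exists_isNilpotent_mul_of_corner [FiniteDimensional K V] (k : ℕ) :
    ∀ (P A : V →ₗ[K] V) (e : V) (f : V →ₗ[K] K), finrank K (LinearMap.range A) ≤ k →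
      (∀ x, P (P x) = P x) → P e = e → (∀ x, f (P x) = f x) → f e = 1 →
      (∀ x, P (A x) = A x) → (∀ x, A (P x) = A x) → A e = 0 → (∀ x, f (A x) = 0) →
      ∃ M N : V →ₗ[K] V, IsNilpotent M ∧ IsNilpotent N ∧
        (∀ x, P (M x) = M x) ∧ (∀ x, M (P x) = M x) ∧
        (∀ x, P (N x) = N x) ∧ (∀ x, N (P x) = N x) ∧ A = M * N := by
  induction k with
  | zero =>
    intro P A e f hk _ _ _ _ _ _ _ _
    have hA : A = 0 := by
      rw [← LinearMap.range_eq_bot, ← Submodule.finrank_eq_zero (R := K)]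
      omega
    exact ⟨0, 0, .zero, .zero, by simp, by simp, by simp, by simp, by simp [hA]⟩
  | succ k ih =>
    intro P A e f hk hP hPe hfP hfe hPA hAP hAe hfA
    by_cases hA : A = 0
    · exact ⟨0, 0, .zero, .zero, by simp, by simp, by simp, by simp, by simp [hA]⟩
    obtain ⟨v, hv⟩ : ∃ v, A v ≠ 0 := by
      by_contra! h
      exact hA (LinearMap.ext h)
    set Q : V →ₗ[K] V := P - f.smulRight e with hQ
    have hQx : ∀ x, Q x = P x - f x • e := fun x => by simp [hQ]
    have hQA : ∀ x, Q (A x) = A x := fun x => by simp [hQx, hPA, hfA]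
    have hAQ : ∀ x, A (Q x) = A x := fun x => by simp [hQx, hAP, hAe]
    have hQQ : ∀ x, Q (Q x) = Q x := fun x => by simp [hQx, hP, hPe, hfP, hfe]
    have hQe : Q e = 0 := by simp [hQx, hPe, hfe]
    have hfQ : ∀ x, f (Q x) = 0 := fun x => by simp [hQx, hfP, hfe]
    have hPQ : ∀ x, P (Q x) = Q x := fun x => by simp [hQx, hP, hPe]
    have hQP : ∀ x, Q (P x) = Q x := fun x => by simp [hQx, hP, hfP]
    have hAw : A (Q v) ≠ 0 := by rwa [hAQ]
    obtain ⟨g₀, hg₀, hg₀A⟩ := Module.exists_dual_eq_one_and_ne_zero (K := K)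
      (x := Q v) (y := A (Q v)) (fun h => hAw (by rw [h, map_zero])) hAw
    set w := Q v with hw
    have hQw : Q w = w := hQQ v
    set g : V →ₗ[K] K := g₀ ∘ₗ Q with hg
    have hgx : ∀ x, g x = g₀ (Q x) := fun x => rfl
    have hgw : g w = 1 := by rw [hgx, hQw, hg₀]
    have hgA : g (A w) ≠ 0 := by rwa [hgx, hQA]
    have hgQ : ∀ x, g (Q x) = g x := fun x => by rw [hgx, hgx, hQQ]
    -- Wedderburn rank reduction
    set q : V →ₗ[K] K := (g (A w))⁻¹ • (g ∘ₗ A) with hq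
    have hqx : ∀ x, q x = (g (A w))⁻¹ * g (A x) := fun x => rfl
    have hqe : q e = 0 := by simp [hqx, hAe]
    have hqw : q w = 1 := by rw [hqx, inv_mul_cancel₀ hgA]
    have hqQ : ∀ x, q (Q x) = q x := fun x => by rw [hqx, hqx, hAQ x]
    have hqP : ∀ x, q (P x) = q x := fun x => by rw [hqx, hqx, hAP x]
    set B : V →ₗ[K] V := A - q.smulRight (A w) with hB
    have hBx : ∀ x, B x = A x - q x • A w := fun x => by simp [hB]
    have hgB : ∀ x, g (B x) = 0 := fun x => by
      rw [hBx, map_sub, map_smul, hqx, smul_eq_mul]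
      field_simp
      ring
    have hlt : LinearMap.range B < LinearMap.range A := by
      refine lt_of_le_of_ne ?_ fun h => ?_
      · rintro _ ⟨x, rfl⟩
        exact ⟨x - q x • w, by simp [hBx]⟩
      · obtain ⟨x, hx⟩ : A w ∈ LinearMap.range B := h ▸ ⟨w, rfl⟩
        exact hgA (hx ▸ hgB x)
    obtain ⟨M, N, hM, hN, hQM, hMQ, hQN, hNQ, hMN⟩ := ih Q B w g
      (by have := Submodule.finrank_lt_finrank_of_lt hlt; omega) hQQ hQw hgQ hgw
      (fun x => by simp [hBx, hQA]) (fun x => by simp [hBx, hAQ, hqQ])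
      (by simp [hBx, hqw]) hgB
    have hMe : M e = 0 := by rw [← hMQ, hQe, map_zero]
    have hNe : N e = 0 := by rw [← hNQ, hQe, map_zero]
    have hfM : ∀ x, f (M x) = 0 := fun x => by rw [← hQM, hfQ]
    have hfN : ∀ x, f (N x) = 0 := fun x => by rw [← hQN, hfQ]
    refine ⟨f.smulRight (A w) + M, q.smulRight e + N,
      hM.add_of_mul_eq_zero_left ?_ ?_, hN.add_of_mul_eq_zero_right ?_ ?_, ?_, ?_, ?_, ?_, ?_⟩
    · ext x; simp [hfA]
    · ext x; simp [hfM]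
    · ext x; simp [hqe]
    · ext x; simp [hNe]
    · intro x
      have : P (M x) = M x := by rw [← hQM, hPQ]
      simp [hPA, this]
    · intro x
      have : M (P x) = M x := by rw [← hMQ, hQP, hMQ]
      simp [hfP, this]
    · intro x
      have : P (N x) = N x := by rw [← hQN, hPQ]
      simp [hPe, this]
    · intro x
      have : N (P x) = N x := by rw [← hNQ, hQP, hNQ]
      simp [hqP, this]
    · ext x
      have h := LinearMap.congr_fun hMN x
      rw [hBx, Module.End.mul_apply, sub_eq_iff_eq_add] at h
      simp [hfe, hfN, hMe, h, add_comm]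

/-- An endomorphism whose kernel is not contained in its range is a product of two nilpotents. -/
theorem LinearMap.exists_isNilpotent_mul_of_not_ker_le_range [FiniteDimensional K V]
    {A : V →ₗ[K] V} (h : ¬ LinearMap.ker A ≤ LinearMap.range A) :
    ∃ M N : V →ₗ[K] V, IsNilpotent M ∧ IsNilpotent N ∧ A = M * N := by
  obtain ⟨e, he, heA⟩ := SetLike.not_le_iff_exists.mp h
  obtain ⟨f, hfe, hf⟩ := Submodule.exists_le_ker_of_notMem heA
  obtain ⟨M, N, hM, hN, -, -, -, -, hMN⟩ :=
    LinearMap.exists_isNilpotent_mul_of_corner _ LinearMap.id A e ((f e)⁻¹ • f) le_rfl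
      (by simp) (by simp) (by simp) (by simp [hfe]) (by simp) (by simp) he
      (fun x => by
        have : f (A x) = 0 := hf ⟨x, rfl⟩
        simp [this])
  exact ⟨M, N, hM, hN, hMN⟩

/-- In dimension at least three, a singular endomorphism whose kernel is contained in its range is
a product of two nilpotents. -/
theorem LinearMap.exists_isNilpotent_mul_of_ker_le_range [FiniteDimensional K V]
    (hV : 2 < finrank K V) {A : V →ₗ[K] V} (hA : LinearMap.ker A ≠ ⊥)
    (h : LinearMap.ker A ≤ LinearMap.range A) :
    ∃ M N : V →ₗ[K] V, IsNilpotent M ∧ IsNilpotent N ∧ A = M * N := by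
  obtain ⟨e₁, hAe₁ : A e₁ = 0, he₁⟩ := Submodule.exists_mem_ne_zero_of_ne_bot hA
  have hrange : LinearMap.range A < ⊤ := by
    rw [lt_top_iff_ne_top, Ne, ← LinearMap.ker_eq_bot_iff_range_eq_top]
    exact hA
  obtain ⟨φ, hφ, hφA'⟩ := Submodule.exists_le_ker_of_lt_top _ hrange
  have hφA : ∀ x, φ (A x) = 0 := fun x => hφA' ⟨x, rfl⟩
  have hφker : ∀ x, A x = 0 → φ x = 0 := fun x hx => hφA' (h hx)
  obtain ⟨u, hu, huA⟩ : ∃ u, φ u ≠ 0 ∧ A u ∉ K ∙ e₁ := by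
    have hker : LinearMap.ker φ ≠ ⊤ := by rwa [Ne, LinearMap.ker_eq_top]
    have hcomap : (K ∙ e₁).comap A ≠ ⊤ := by
      intro htop
      have hle : LinearMap.range A ≤ K ∙ e₁ := by
        rw [LinearMap.range_eq_map, Submodule.map_le_iff_le_comap, htop]
      have h1 := Submodule.finrank_mono hle
      have h2 := Submodule.finrank_mono h
      have h3 := A.finrank_range_add_finrank_ker
      rw [finrank_span_singleton he₁] at h1
      omega
    by_contra! hcon
    obtain ⟨a, -, ha⟩ := SetLike.exists_of_lt (lt_top_iff_ne_top.mpr hker)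
    obtain ⟨b, -, hb⟩ := SetLike.exists_of_lt (lt_top_iff_ne_top.mpr hcomap)
    rw [Submodule.mem_comap] at hb
    have hb0 : φ b = 0 := by
      by_contra hb0
      exact hb (hcon b hb0)
    have hab := hcon (a + b) (by simpa [hb0] using ha)
    rw [map_add] at hab
    exact hb ((Submodule.add_mem_iff_right _ (hcon a ha)).mp hab)
  have he₁span : e₁ ∉ Submodule.span K {u, A u} := by
    rw [Submodule.mem_span_pair]
    rintro ⟨a, b, hab⟩
    have ha : a = 0 := by
      have := congrArg φ hab
      simpa [hφA, hφker e₁ hAe₁, hu] using this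
    rw [ha, zero_smul, zero_add] at hab
    have hb : b ≠ 0 := fun hb => he₁ (by rw [← hab, hb, zero_smul])
    exact huA (Submodule.mem_span_singleton.mpr ⟨b⁻¹, by rw [← hab, inv_smul_smul₀ hb]⟩)
  obtain ⟨ψ, hψe₁, hψ⟩ := Submodule.exists_le_ker_of_notMem he₁span
  have hψu : ψ u = 0 := hψ (Submodule.subset_span (by simp))
  have hψAu : ψ (A u) = 0 := hψ (Submodule.subset_span (by simp))
  set f₁ : V →ₗ[K] K := (ψ e₁)⁻¹ • ψ with hf₁
  set f₂ : V →ₗ[K] K := (φ u)⁻¹ • φ with hf₂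
  have h11 : f₁ e₁ = 1 := by simp [hf₁, hψe₁]
  have h1u : f₁ u = 0 := by simp [hf₁, hψu]
  have h1Au : f₁ (A u) = 0 := by simp [hf₁, hψAu]
  have h21 : f₂ e₁ = 0 := by simp [hf₂, hφker e₁ hAe₁]
  have h2u : f₂ u = 1 := by simp [hf₂, hu]
  have h2A : ∀ x, f₂ (A x) = 0 := fun x => by simp [hf₂, hφA]
  have hAu : A u ≠ 0 := fun h0 => hu (hφker u h0)
  clear_value f₁ f₂
  set P : V →ₗ[K] V := LinearMap.id - f₁.smulRight e₁ - f₂.smulRight u with hP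
  have hPx : ∀ x, P x = x - f₁ x • e₁ - f₂ x • u := fun x => by simp [hP]
  have hPP : ∀ x, P (P x) = P x := fun x => by simp [hPx, h11, h1u, h21, h2u]
  have hPe₁ : P e₁ = 0 := by simp [hPx, h11, h21]
  have hPu : P u = 0 := by simp [hPx, h1u, h2u]
  have h1P : ∀ x, f₁ (P x) = 0 := fun x => by simp [hPx, h11, h1u]
  have h2P : ∀ x, f₂ (P x) = 0 := fun x => by simp [hPx, h21, h2u]
  have hPAu : P (A u) = A u := by simp [hPx, h1Au, h2A]
  have h1AP : ∀ x, f₁ (A (P x)) = f₁ (A x) := fun x => by simp [hPx, hAe₁, h1Au]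
  obtain ⟨v, hv⟩ := h hAe₁
  set e₃ := P v with he₃
  have hPe₃ : P e₃ = e₃ := hPP v
  have h1Ae₃ : f₁ (A e₃) = 1 := by rw [he₃, h1AP, hv, h11]
  have he₃0 : e₃ ≠ 0 := fun h0 => by simp [h0] at h1Ae₃
  clear_value e₃ P
  obtain ⟨g, hge₃, hgAu⟩ := Module.exists_dual_eq_one_and_ne_zero (K := K) he₃0 hAu
  set f₃ : V →ₗ[K] K := g ∘ₗ P with hf₃
  have h3P : ∀ x, f₃ (P x) = f₃ x := fun x => by simp [hf₃, hPP]
  have h33 : f₃ e₃ = 1 := by simp [hf₃, hPe₃, hge₃]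
  have h3Au : f₃ (A u) ≠ 0 := by simpa [hf₃, hPAu] using hgAu
  clear_value f₃
  set y := P (A e₃) with hy
  have hPy : P y = y := hPP _
  set z : V →ₗ[K] K :=
    (f₃ (A u))⁻¹ • (f₃ ∘ₗ A ∘ₗ P - f₃ (A e₃) • (f₁ ∘ₗ A)) with hz
  have hzx : ∀ x, z x = (f₃ (A u))⁻¹ * (f₃ (A (P x)) - f₃ (A e₃) * f₁ (A x)) := fun x => rfl
  have hzP : ∀ x, z (P x) = z x := fun x => by rw [hzx, hzx, hPP, h1AP]
  have hze₁ : z e₁ = 0 := by rw [← hzP, hPe₁, map_zero]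
  have hze₃ : z e₃ = 0 := by simp [hzx, hPe₃, h1Ae₃]
  have hzmul : ∀ x, z x * f₃ (A u) = f₃ (A (P x)) - f₃ (A e₃) * f₁ (A x) := fun x => by
    rw [hzx]
    field_simp
  clear_value z
  set B : V →ₗ[K] V :=
    P ∘ₗ A ∘ₗ P - z.smulRight (A u) - (f₁ ∘ₗ A).smulRight y with hB
  have hBx : ∀ x, B x = P (A (P x)) - z x • A u - f₁ (A x) • y := fun x => by simp [hB]
  obtain ⟨M, N, hM, hN, hPM, hMP, hPN, hNP, hMN⟩ :=
    LinearMap.exists_isNilpotent_mul_of_corner _ P B e₃ f₃ le_rfl hPP hPe₃ h3P h33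
      (fun x => by simp [hBx, hPP, hPAu, hPy])
      (fun x => by simp [hBx, hPP, hzP, h1AP])
      (by simp [hBx, hPe₃, hze₃, h1Ae₃, hy])
      (fun x => by
        simp only [hBx, map_sub, map_smul, smul_eq_mul, hzmul, hy, h3P]
        ring)
  have hMe₁ : M e₁ = 0 := by rw [← hMP, hPe₁, map_zero]
  have hMu : M u = 0 := by rw [← hMP, hPu, map_zero]
  have hNe₁ : N e₁ = 0 := by rw [← hNP, hPe₁, map_zero]
  have hNu : N u = 0 := by rw [← hNP, hPu, map_zero]
  have h1M : ∀ x, f₁ (M x) = 0 := fun x => by rw [← hPM, h1P]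
  have h2M : ∀ x, f₂ (M x) = 0 := fun x => by rw [← hPM, h2P]
  have h1N : ∀ x, f₁ (N x) = 0 := fun x => by rw [← hPN, h1P]
  have h2N : ∀ x, f₂ (N x) = 0 := fun x => by rw [← hPN, h2P]
  have h2y : f₂ y = 0 := h2P _
  refine ⟨f₂.smulRight (e₁ + y) + (f₁.smulRight (A u) + M),
    (f₂ + z).smulRight e₁ + ((f₁ ∘ₗ A).smulRight u + N),
    (hM.add_of_mul_eq_zero_left ?_ ?_).add_of_mul_eq_zero_left ?_ ?_,
    (hN.add_of_mul_eq_zero_right ?_ ?_).add_of_mul_eq_zero_right ?_ ?_, ?_⟩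
  · ext x; simp [h1Au]
  · ext x; simp [h1M]
  · ext x; simp [h21, h2y]
  · ext x; simp [h2A, h2M]
  · ext x; simp [h1Au]
  · ext x; simp [hNu]
  · ext x; simp [h21, hze₁]
  · ext x; simp [hAe₁, hNe₁]
  · ext x
    have hBA : A x = B x + z x • A u + f₁ (A x) • y + f₁ (A x) • e₁ + f₂ x • A u := by
      have hAP : A (P x) = A x - f₂ x • A u := by simp [hPx, hAe₁]
      rw [hBx, hAP, map_sub, map_smul, hPAu, hPx (A x), h2A]
      module
    have hMNx : B x = M (N x) := LinearMap.congr_fun hMN x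
    rw [hBA, hMNx]
    simp only [Module.End.mul_apply, LinearMap.add_apply, LinearMap.smulRight_apply,
      LinearMap.comp_apply, map_add, map_smul, h11, h1u, h21, h2u, h1N, h2N, hMe₁, hMu]
    module

end

/-- For `n ≠ 2`, every singular `n × n` matrix over a field is a product of two
nilpotent matrices. -/
theorem singular_is_product_of_two_nilpotents
    (F : Type*) [Field F] (n : ℕ) (hn : 0 < n) (hn2 : n ≠ 2)
    (A : Matrix (Fin n) (Fin n) F) (hA : ¬ IsUnit A) :
    ∃ N₁ N₂ : Matrix (Fin n) (Fin n) F,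
      IsNilpotent N₁ ∧ IsNilpotent N₂ ∧ A = N₁ * N₂ := by
  let Φ := Matrix.toLinAlgEquiv' (R := F) (n := Fin n)
  have hker : LinearMap.ker (Φ A) ≠ ⊥ := fun h =>
    hA ((MulEquiv.isUnit_map Φ).mp (LinearMap.isUnit_iff_ker_eq_bot _ |>.mpr h))
  obtain ⟨M, N, hM, hN, hMN⟩ :
      ∃ M N : (Fin n → F) →ₗ[F] Fin n → F, IsNilpotent M ∧ IsNilpotent N ∧ Φ A = M * N := by
    by_cases h : LinearMap.ker (Φ A) ≤ LinearMap.range (Φ A)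
    · refine LinearMap.exists_isNilpotent_mul_of_ker_le_range ?_ hker h
      have h1 := Submodule.finrank_mono h
      have h2 := (Φ A).finrank_range_add_finrank_ker
      have h3 := Submodule.one_le_finrank_iff.mpr hker
      rw [Module.finrank_fin_fun] at h2 ⊢
      omega
    · exact LinearMap.exists_isNilpotent_mul_of_not_ker_le_range h
  exact ⟨Φ.symm M, Φ.symm N, hM.map Φ.symm, hN.map Φ.symm, by
    rw [← map_mul, ← hMN, AlgEquiv.symm_apply_apply]⟩
end

section
/- Let F be a field and let A be a 2×2 matrix over F that is nilpotent and nonzero. Then A cannot be written as a product N₁N₂ of two nilpotent 2×2 matrices over F. -/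
/-- A nilpotent matrix over a field has trace zero. -/
lemma Matrix.trace_eq_zero_of_isNilpotent {F n : Type*} [Field F] [Fintype n] [DecidableEq n]
    {N : Matrix n n F} (hN : IsNilpotent N) : N.trace = 0 :=
  (Matrix.isNilpotent_trace_of_isNilpotent hN).eq_zero

/-- A nilpotent matrix of positive size over a field has determinant zero. -/
lemma Matrix.det_eq_zero_of_isNilpotent {F n : Type*} [Field F] [Fintype n] [DecidableEq n]
    [Nonempty n] {N : Matrix n n F} (hN : IsNilpotent N) : N.det = 0 := by
  obtain ⟨k, hk⟩ := hN
  refine eq_zero_of_pow_eq_zero (n := k) ?_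
  rw [← Matrix.det_pow, hk, Matrix.det_zero]

/-- A nonzero nilpotent `2 × 2` matrix over a field is not a product of two
nilpotent `2 × 2` matrices. -/
theorem two_by_two_nonzero_nilpotent_not_product_of_nilpotents
    (F : Type*) [Field F] (A : Matrix (Fin 2) (Fin 2) F)
    (hA : IsNilpotent A) (hA0 : A ≠ 0) :
    ¬ ∃ N₁ N₂ : Matrix (Fin 2) (Fin 2) F,
        IsNilpotent N₁ ∧ IsNilpotent N₂ ∧ A = N₁ * N₂ := by
  rintro ⟨M, N, hM, hN, rfl⟩
  apply hA0
  have htM := Matrix.trace_eq_zero_of_isNilpotent hM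
  have htN := Matrix.trace_eq_zero_of_isNilpotent hN
  have htMN := Matrix.trace_eq_zero_of_isNilpotent hA
  have hdM := Matrix.det_eq_zero_of_isNilpotent hM
  have hdN := Matrix.det_eq_zero_of_isNilpotent hN
  simp only [Matrix.trace_fin_two, Matrix.det_fin_two, Matrix.mul_apply,
    Fin.sum_univ_two] at htM htN htMN hdM hdN
  have hM11 := eq_neg_of_add_eq_zero_right htM
  have hN11 := eq_neg_of_add_eq_zero_right htN
  rw [hM11] at hdM htMN
  rw [hN11] at hdN htMN
  -- The square of each entry of `M * N` is a multiple of the trace of `M * N`.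
  ext i j
  fin_cases i <;> fin_cases j <;>
    simp only [Fin.zero_eta, Fin.mk_one, Matrix.mul_apply, Fin.sum_univ_two,
      Matrix.zero_apply, hM11, hN11] <;>
    refine eq_zero_of_pow_eq_zero (n := 2) ?_ <;>
    grind
end

section
/- Let F be a field and A an n×n matrix over F with A² ≠ 0. Then A is similar over F to a block matrix of the form [[λ, cᵀ],[b, D]], where λ ∈ F, D is an (n−1)×(n−1) matrix over F with rank(D) = rank(A) − 1, b is a column vector in the column space (range) of D, and c is a column vector in the range of Dᵀ. -/
open Matrix Module

namespace Matrix

variable {F : Type*} [Field F] {n : ℕ}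

/-- If `f ⬝ᵥ v = 1`, some invertible matrix has first column `v`, and its inverse has
first row `f`. -/
theorem exists_isUnit_mulVec_single_vecMul_eq_single (f v : Fin (n + 1) → F) (hfv : f ⬝ᵥ v = 1) :
    ∃ S : Matrix (Fin (n + 1)) (Fin (n + 1)) F,
      IsUnit S ∧ S *ᵥ Pi.single 0 1 = v ∧ f ᵥ* S = Pi.single 0 1 := by
  let φ : (Fin (n + 1) → F) →ₗ[F] F := dotProductBilin F F f
  have hφ (x : Fin (n + 1) → F) : φ x = f ⬝ᵥ x := rfl
  have hsurj : Function.Surjective φ := fun a ↦ ⟨a • v, by simp [hφ, hfv]⟩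
  have hker : finrank F (LinearMap.ker φ) = n := by
    have h := φ.finrank_range_add_finrank_ker
    rw [LinearMap.range_eq_top.2 hsurj, finrank_top, finrank_self, finrank_fin_fun] at h
    omega
  let B := Basis.mkFinCons v (finBasisOfFinrankEq F (LinearMap.ker φ) hker)
    (fun c x hx h ↦ by
      have h' := congrArg φ h
      rwa [map_add, map_smul, LinearMap.mem_ker.1 hx, hφ, hfv, map_zero, add_zero, smul_eq_mul,
        mul_one] at h')
    (fun z ↦ ⟨-φ z, by
      rw [LinearMap.mem_ker, map_add, map_smul, hφ v, hfv]
      simp⟩)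
  have hB : ⇑B = Fin.cons v ((↑) ∘ finBasisOfFinrankEq F (LinearMap.ker φ) hker) :=
    Basis.coe_mkFinCons ..
  refine ⟨(Matrix.of B)ᵀ, ?_, ?_, ?_⟩
  · exact linearIndependent_cols_iff_isUnit.1 B.linearIndependent
  · ext i
    simp [hB]
  · ext j
    change f ⬝ᵥ B j = _
    rw [hB]
    induction j using Fin.cases with
    | zero => simpa using hfv
    | succ j =>
      have h := LinearMap.mem_ker.1 (finBasisOfFinrankEq F (LinearMap.ker φ) hker j).2
      rw [hφ] at h
      simpa using h

/-- Deleting the first row and column of `M` lowers the rank by one if the first standard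
basis vector is the image under `Mᵀ` of a vector with nonzero first entry. -/
theorem rank_submatrix_succ_add_one (M : Matrix (Fin (n + 1)) (Fin (n + 1)) F)
    {g : Fin (n + 1) → F} (hg : g ᵥ* M = Pi.single 0 1) (hg0 : g 0 ≠ 0) :
    (M.submatrix Fin.succ Fin.succ).rank + 1 = M.rank := by
  let D := M.submatrix Fin.succ Fin.succ
  let L : (Fin n → F) →ₗ[F] Fin (n + 1) → F :=
    { toFun := vecCons 0
      map_add' := by simp
      map_smul' := by simp }
  have hL (z : Fin n → F) : L z = vecCons 0 z := rfl
  have hLinj : Function.Injective L := fun x y h ↦ by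
    simpa [hL] using congrArg vecTail h
  have hsucc (z : Fin n → F) (i : Fin n) : (M *ᵥ vecCons 0 z) i.succ = (D *ᵥ z) i := by
    simp [mulVec, dotProduct, Fin.sum_univ_succ, D]
  have hker : LinearMap.ker M.mulVecLin = (LinearMap.ker D.mulVecLin).map L := by
    ext z
    simp only [Submodule.mem_map, LinearMap.mem_ker, mulVecLin_apply]
    constructor
    · intro hz
      have hz0 : z 0 = 0 := by
        have h := dotProduct_mulVec g M z
        rw [hz, hg] at h
        simpa using h.symm
      have hcons : vecCons 0 (vecTail z) = z := by
        rw [← hz0]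
        exact cons_head_tail z
      refine ⟨vecTail z, ?_, hcons⟩
      ext i
      rw [← hsucc, hcons, hz]
      rfl
    · rintro ⟨z, hz, rfl⟩
      have h := dotProduct_mulVec g M (L z)
      rw [hg, dotProduct, Fin.sum_univ_succ] at h
      simp only [hL, hsucc, hz] at h
      have h0 : (M *ᵥ vecCons 0 z) 0 = 0 := by simpa [hg0] using h
      ext i
      induction i using Fin.cases with
      | zero => exact h0
      | succ i => rw [hL, hsucc, hz]; rfl
  have hM := M.mulVecLin.finrank_range_add_finrank_ker
  have hD := D.mulVecLin.finrank_range_add_finrank_ker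
  rw [hker, ← (Submodule.equivMapOfInjective L hLinj _).finrank_eq, finrank_fin_fun] at hM
  rw [finrank_fin_fun] at hD
  change finrank F (LinearMap.range D.mulVecLin) + 1 = finrank F (LinearMap.range M.mulVecLin)
  omega

/-- If the first standard basis vector is the image under `M` of a vector with nonzero first
entry, then the first column of `M` without its top entry lies in the range of the matrix
obtained by deleting the first row and column of `M`. -/
theorem col_zero_mem_range_submatrix_succ (M : Matrix (Fin (n + 1)) (Fin (n + 1)) F)
    {u : Fin (n + 1) → F} (hu : M *ᵥ u = Pi.single 0 1) (hu0 : u 0 ≠ 0) :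
    (fun i : Fin n ↦ M i.succ 0) ∈
      LinearMap.range (M.submatrix Fin.succ Fin.succ).mulVecLin := by
  refine ⟨-(u 0)⁻¹ • vecTail u, ?_⟩
  ext i
  have h := congrFun hu i.succ
  rw [mulVec, dotProduct, Fin.sum_univ_succ] at h
  rw [mulVecLin_apply, mulVec_smul, Pi.smul_apply, mulVec, dotProduct]
  simp only [submatrix_apply, vecTail, Function.comp_apply, smul_eq_mul]
  rw [Pi.single_eq_of_ne (Fin.succ_ne_zero i)] at h
  rw [eq_neg_of_add_eq_zero_right h]
  field_simp

/-- If `A² ≠ 0`, there are `u` and `g` with `g A² u = 1` and `g A u ≠ 0`. -/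
theorem exists_vecMul_dotProduct_mulVec_eq_one {m : Type*} [Fintype m] [DecidableEq m]
    (A : Matrix m m F) (hA : A * A ≠ 0) :
    ∃ g u : m → F, (g ᵥ* A) ⬝ᵥ (A *ᵥ u) = 1 ∧ (g ᵥ* A) ⬝ᵥ u ≠ 0 := by
  obtain ⟨u, hu⟩ : ∃ u, A *ᵥ (A *ᵥ u) ≠ 0 := by
    by_contra! h
    refine hA (ext_of_mulVec_single fun i ↦ ?_)
    rw [← mulVec_mulVec, h, zero_mulVec]
  have hu' : A *ᵥ u ≠ 0 := fun h ↦ hu (by rw [h, mulVec_zero])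
  obtain ⟨g, hg2, hg1⟩ : ∃ g, g ⬝ᵥ A *ᵥ (A *ᵥ u) ≠ 0 ∧ g ⬝ᵥ A *ᵥ u ≠ 0 := by
    obtain ⟨g₁, h₁⟩ : ∃ g, g ⬝ᵥ A *ᵥ (A *ᵥ u) ≠ 0 := by
      by_contra! h
      exact hu (dotProduct_eq_zero _ fun w ↦ by rw [dotProduct_comm, h])
    obtain ⟨g₂, h₂⟩ : ∃ g, g ⬝ᵥ A *ᵥ u ≠ 0 := by
      by_contra! h
      exact hu' (dotProduct_eq_zero _ fun w ↦ by rw [dotProduct_comm, h])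
    by_cases h₃ : g₁ ⬝ᵥ A *ᵥ u = 0
    · by_cases h₄ : g₂ ⬝ᵥ A *ᵥ (A *ᵥ u) = 0
      · exact ⟨g₁ + g₂, by rwa [add_dotProduct, h₄, add_zero], by rwa [add_dotProduct, h₃, zero_add]⟩
      · exact ⟨g₂, h₄, h₂⟩
    · exact ⟨g₁, h₁, h₃⟩
  refine ⟨(g ⬝ᵥ A *ᵥ (A *ᵥ u))⁻¹ • g, u, ?_, ?_⟩
  · rw [← dotProduct_mulVec, smul_dotProduct, smul_eq_mul, inv_mul_cancel₀ hg2]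
  · rw [← dotProduct_mulVec, smul_dotProduct, smul_eq_mul]
    exact mul_ne_zero (inv_ne_zero hg2) hg1

end Matrix

/-- **Sourour's Proposition.** If `A` is an `n × n` matrix over a field with `A² ≠ 0`,
then `A` is similar to a block matrix `[[λ, cᵀ], [b, D]]` where `D` is `(n-1) × (n-1)`
with `rank D = rank A - 1`, `b` lies in the range (column space) of `D`, and `c` lies
in the range of `Dᵀ`. (Here the `n × n` size is written as `n + 1`.) -/
theorem sourour_proposition
    (F : Type*) [Field F] (n : ℕ) (A : Matrix (Fin (n + 1)) (Fin (n + 1)) F)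
    (hA : A * A ≠ 0) :
    ∃ (S : Matrix (Fin (n + 1)) (Fin (n + 1)) F) (lam : F)
      (b c : Fin n → F) (D : Matrix (Fin n) (Fin n) F),
      IsUnit S ∧
      S⁻¹ * A * S =
        Matrix.reindex (finSumFinEquiv.trans (finCongr (Nat.add_comm 1 n)))
          (finSumFinEquiv.trans (finCongr (Nat.add_comm 1 n)))
          (Matrix.fromBlocks (lam • (1 : Matrix (Fin 1) (Fin 1) F))
            (Matrix.of fun (_ : Fin 1) j => c j)
            (Matrix.of fun i (_ : Fin 1) => b i) D) ∧
      D.rank = A.rank - 1 ∧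
      b ∈ LinearMap.range D.mulVecLin ∧
      c ∈ LinearMap.range (Matrix.transpose D).mulVecLin := by
  obtain ⟨g, u, hgu2, hgu1⟩ := exists_vecMul_dotProduct_mulVec_eq_one A hA
  obtain ⟨S, hS, hSv, hfS⟩ := exists_isUnit_mulVec_single_vecMul_eq_single _ _ hgu2
  have hdet : IsUnit S.det := (isUnit_iff_isUnit_det S).1 hS
  have hSS : S * S⁻¹ = 1 := mul_nonsing_inv S hdet
  have hS' : S⁻¹ * S = 1 := nonsing_inv_mul S hdet
  let M := S⁻¹ * A * S
  have hu : M *ᵥ (S⁻¹ *ᵥ u) = Pi.single 0 1 := by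
    rw [mulVec_mulVec, Matrix.mul_assoc, hSS, Matrix.mul_one, ← mulVec_mulVec, ← hSv,
      mulVec_mulVec, hS', one_mulVec]
  have hg : (g ᵥ* S) ᵥ* M = Pi.single 0 1 := by
    rw [vecMul_vecMul, ← Matrix.mul_assoc, ← Matrix.mul_assoc, hSS, Matrix.one_mul,
      ← vecMul_vecMul, hfS]
  have hu0 : (S⁻¹ *ᵥ u) 0 ≠ 0 := by
    have h : (S⁻¹ *ᵥ u) 0 = (g ᵥ* A) ⬝ᵥ u := by
      rw [← single_one_dotProduct 0 (S⁻¹ *ᵥ u), ← hfS, ← dotProduct_mulVec, mulVec_mulVec, hSS,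
        one_mulVec]
    rwa [h]
  have hg0 : (g ᵥ* S) 0 ≠ 0 := by
    have h : (g ᵥ* S) 0 = (g ᵥ* A) ⬝ᵥ u := by
      rw [← dotProduct_single_one (g ᵥ* S) 0, ← dotProduct_mulVec, hSv, dotProduct_mulVec]
    rwa [h]
  have hrank : M.rank = A.rank := by
    rw [rank_mul_eq_left_of_isUnit_det _ _ hdet,
      rank_mul_eq_right_of_isUnit_det _ _ (isUnit_nonsing_inv_det S hdet)]
  refine ⟨S, M 0 0, fun i ↦ M i.succ 0, fun j ↦ M 0 j.succ, M.submatrix Fin.succ Fin.succ,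
    hS, ?_, ?_, col_zero_mem_range_submatrix_succ M hu hu0, ?_⟩
  · change M = _
    have h0 : (finSumFinEquiv.trans (finCongr (Nat.add_comm 1 n))) (Sum.inl 0) = 0 := by
      ext
      simp
    have h1 (j : Fin n) :
        (finSumFinEquiv.trans (finCongr (Nat.add_comm 1 n))) (Sum.inr j) = j.succ := by
      ext
      simp
    rw [← Equiv.symm_apply_eq, reindex_symm, reindex_apply]
    ext (i | i) (j | j)
    · simp only [Subsingleton.elim i 0, Subsingleton.elim j 0, submatrix_apply,
        Equiv.symm_symm, h0]
      simp
    · simp only [Subsingleton.elim i 0, submatrix_apply, Equiv.symm_symm, h0, h1]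
      simp
    · simp only [Subsingleton.elim j 0, submatrix_apply, Equiv.symm_symm, h0, h1]
      simp
    · simp only [submatrix_apply, Equiv.symm_symm, h1]
      simp
  · rw [← hrank, ← rank_submatrix_succ_add_one M hg hg0, Nat.add_sub_cancel]
  · exact col_zero_mem_range_submatrix_succ Mᵀ (by rwa [mulVec_transpose]) hg0
end

section
/- Let F be a field and A an n×n matrix over F such that A² ≠ 0 and A is not a scalar matrix (A ≠ λI for every λ ∈ F). Then there exists a vector x₀ ∈ Fⁿ such that x₀ and Ax₀ are linearly independent and A²x₀ ≠ 0. -/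
/-- An endomorphism `f` of a vector space which is not a scalar and satisfies `f² ≠ 0` admits a
vector `x` such that `x` and `f x` are linearly independent and `f (f x) ≠ 0`. -/
theorem LinearMap.exists_linearIndependent_pair_and_apply_apply_ne_zero
    {K V : Type*} [Field K] [AddCommGroup V] [Module K V] {f : V →ₗ[K] V}
    (hsq : ∃ w, f (f w) ≠ 0) (hscalar : ∀ a : K, f ≠ a • 1) :
    ∃ x, LinearIndependent K ![x, f x] ∧ f (f x) ≠ 0 := by
  by_contra! h
  have eigen : ∀ x, f (f x) ≠ 0 → ∃ a : K, a • x = f x := by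
    intro x hx
    have hx0 : x ≠ 0 := by rintro rfl; simp at hx
    by_contra! hne
    exact hx (h x ((LinearIndependent.pair_iff' hx0).2 hne))
  obtain ⟨v, hv⟩ : ∃ v, LinearIndependent K ![v, f v] := by
    by_contra! hdep
    obtain ⟨a, ha⟩ := LinearMap.exists_eq_smul_id_of_forall_notLinearIndependent hdep
    exact hscalar a ha
  have hv2 := h v hv
  have hv0 : v ≠ 0 := hv.ne_zero 0
  obtain ⟨w, hw⟩ := hsq
  obtain ⟨a, ha⟩ := eigen w hw
  obtain ⟨b, hb⟩ := eigen (v + w) (by simpa [hv2] using hw)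
  have hbw : b • f (f w) = a • f (f w) := by
    have hff := congrArg (fun x => f (f x)) hb
    simpa [hv2, ← ha] using hff
  have hab : b = a := smul_left_injective K hw hbw
  refine (LinearIndependent.pair_iff' hv0).1 hv a ?_
  simpa [hab, ← ha] using hb


/-- If `A` is an `n × n` matrix over a field with `A² ≠ 0` which is not a scalar matrix,
then there is a vector `x₀` such that `x₀` and `A x₀` are linearly independent and
`A² x₀ ≠ 0`. -/
theorem exists_vector_independent_of_image
    (F : Type*) [Field F] (n : ℕ) (A : Matrix (Fin n) (Fin n) F)
    (hA : A * A ≠ 0) (hscalar : ∀ lam : F, A ≠ lam • (1 : Matrix (Fin n) (Fin n) F)) :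
    ∃ x₀ : Fin n → F,
      LinearIndependent F ![x₀, A.mulVec x₀] ∧ A.mulVec (A.mulVec x₀) ≠ 0 := by
  refine LinearMap.exists_linearIndependent_pair_and_apply_apply_ne_zero (f := A.mulVecLin) ?_ ?_
  · by_contra! h
    refine hA (Matrix.ext_of_mulVec_single fun i => ?_)
    rw [← Matrix.mulVec_mulVec, Matrix.zero_mulVec]
    exact h (Pi.single i 1)
  · intro a ha
    refine hscalar a (Matrix.ext_of_mulVec_single fun i => ?_)
    rw [Matrix.smul_mulVec, Matrix.one_mulVec]
    exact LinearMap.congr_fun ha (Pi.single i 1)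
end

section
/- Let F be a field and k a positive odd integer. Then the (k+2)×(k+2) block diagonal matrix Dg[J_k(0), J_2(0)] is a product of two nilpotent matrices over F, each of rank equal to rank(Dg[J_k(0), J_2(0)]) = k. -/
/-- The `k × k` nilpotent Jordan block `J_k(0)`, with ones on the subdiagonal. -/
def jordanBlock0 (F : Type*) [Field F] (k : ℕ) : Matrix (Fin k) (Fin k) F :=
  Matrix.of fun i j => if (i : ℕ) = (j : ℕ) + 1 then 1 else 0

/-- The zero-one matrix of a relation. -/
noncomputable def relationMatrix {n : Type*} (F : Type*) [Field F] (R : n → n → Prop) :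
    Matrix n n F :=
  open Classical in Matrix.of fun i j => if R i j then 1 else 0

theorem relationMatrix_transpose {n F : Type*} [Field F] (R : n → n → Prop) :
    (relationMatrix F R).transpose = relationMatrix F fun i j => R j i := rfl

section RelationMatrix

variable {n F : Type*} [Fintype n] [Field F]

theorem relationMatrix_mul {R S : n → n → Prop}
    (hS : ∀ l l' j, S l j → S l' j → l = l') :
    relationMatrix F R * relationMatrix F S = relationMatrix F fun i j => ∃ l, R i l ∧ S l j := by
  classical
  ext i j
  simp only [relationMatrix, Matrix.mul_apply, Matrix.of_apply]
  by_cases h : ∃ l, S l j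
  · obtain ⟨l, hl⟩ := h
    have hiff : (∃ l, R i l ∧ S l j) ↔ R i l :=
      ⟨fun ⟨l', h₁, h₂⟩ => hS l' l j h₂ hl ▸ h₁, fun h => ⟨l, h, hl⟩⟩
    rw [Finset.sum_eq_single l]
    · simp [hl, hiff]
    · intro l' _ hne
      simp [show ¬ S l' j from fun h => hne (hS _ _ _ h hl)]
    · simp
  · push Not at h
    simp [h]

theorem isNilpotent_of_weight [DecidableEq n] (N : Matrix n n F) (w : n → ℕ)
    (hw : ∀ i j, N i j ≠ 0 → w j < w i) : IsNilpotent N := by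
  have key : ∀ m i j, (N ^ m) i j ≠ 0 → w j + m ≤ w i := by
    intro m
    induction m with
    | zero =>
      intro i j h
      have : i = j := by
        by_contra hne
        simp [hne] at h
      simp [this]
    | succ m ih =>
      intro i j h
      rw [pow_succ, Matrix.mul_apply] at h
      obtain ⟨l, -, hl⟩ := Finset.exists_ne_zero_of_sum_ne_zero h
      have h₁ := ih i l (left_ne_zero_of_mul hl)
      have h₂ := hw l j (right_ne_zero_of_mul hl)
      omega
  refine ⟨Finset.univ.sup w + 1, ?_⟩
  ext i j
  by_contra h
  have h₁ := key _ i j h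
  have h₂ : w i ≤ Finset.univ.sup w := Finset.le_sup (Finset.mem_univ i)
  omega

theorem isNilpotent_relationMatrix {R : n → n → Prop} [DecidableEq n] (w : n → ℕ)
    (hw : ∀ i j, R i j → w j < w i) : IsNilpotent (relationMatrix F R) :=
  isNilpotent_of_weight _ w fun i j h => hw i j <| by
    by_contra hR
    simp [relationMatrix, hR] at h

theorem rank_relationMatrix_le_of_domain {R : n → n → Prop} (s : Finset n)
    (hR : ∀ i j, R i j → j ∈ s) : (relationMatrix F R).rank ≤ s.card := by
  classical
  have h : relationMatrix F R =
      relationMatrix F R * Matrix.diagonal fun j => if j ∈ s then 1 else 0 := by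
    ext i j
    have := hR i j
    by_cases hj : j ∈ s <;> simp_all [relationMatrix]
  rw [h]
  refine (Matrix.rank_mul_le_right _ _).trans ?_
  simp [Matrix.rank_diagonal]

theorem card_le_rank_relationMatrix {R : n → n → Prop} (s : Finset n)
    (hdom : ∀ j, (∃ i, R i j) ↔ j ∈ s)
    (hfun : ∀ i i' j, R i j → R i' j → i = i') (hinj : ∀ i j j', R i j → R i j' → j = j') :
    s.card ≤ (relationMatrix F R).rank := by
  classical
  have h : (relationMatrix F R).transpose * relationMatrix F R =
      Matrix.diagonal fun j => if j ∈ s then 1 else 0 := by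
    rw [relationMatrix_transpose, relationMatrix_mul hfun]
    ext i j
    by_cases hij : i = j
    · subst hij
      simp [relationMatrix, hdom]
    · have : ¬ ∃ l, R l i ∧ R l j := fun ⟨l, h₁, h₂⟩ => hij (hinj l i j h₁ h₂)
      simp only [relationMatrix, Matrix.of_apply, this, if_false, Matrix.diagonal_apply_ne _ hij]
  have h₂ := Matrix.rank_mul_le_right (relationMatrix F R).transpose (relationMatrix F R)
  rw [h, Matrix.rank_diagonal] at h₂
  simpa using h₂

end RelationMatrix

theorem reindex_fromBlocks_jordanBlock0 (F : Type*) [Field F] (k : ℕ) :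
    Matrix.reindex finSumFinEquiv finSumFinEquiv
        (Matrix.fromBlocks (jordanBlock0 F k) 0 0 (jordanBlock0 F 2)) =
      relationMatrix F fun i j : Fin (k + 2) => i.val = j.val + 1 ∧ j.val + 1 ≠ k := by
  ext i j
  obtain ⟨i, rfl⟩ := finSumFinEquiv.surjective i
  obtain ⟨j, rfl⟩ := finSumFinEquiv.surjective j
  rcases i with i | i <;> rcases j with j | j <;>
    simp [relationMatrix, jordanBlock0] <;> grind

/-- **Lemma (Wu, corrected).** For `k` a positive odd integer, the block diagonal matrix
`Dg[J_k(0), J_2(0)]` is a product of two nilpotent matrices, each of rank equal to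
`rank Dg[J_k(0), J_2(0)] = k`. -/
theorem jordan_k_2_product_of_nilpotents
    (F : Type*) [Field F] (k : ℕ) (hk : 0 < k) (hodd : Odd k) :
    ∃ N₁ N₂ : Matrix (Fin (k + 2)) (Fin (k + 2)) F,
      IsNilpotent N₁ ∧ IsNilpotent N₂ ∧
      Matrix.reindex finSumFinEquiv finSumFinEquiv
          (Matrix.fromBlocks (jordanBlock0 F k) 0 0 (jordanBlock0 F 2)) = N₁ * N₂ ∧
      N₁.rank = k ∧ N₂.rank = k ∧
      (Matrix.reindex finSumFinEquiv finSumFinEquiv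
          (Matrix.fromBlocks (jordanBlock0 F k) 0 0 (jordanBlock0 F 2))).rank = k := by
  obtain ⟨m, rfl⟩ := hodd
  obtain ⟨u, hu⟩ : ∃ u, (m = 0 ∧ u = 0) ∨ (0 < m ∧ u = 1) := by
    rcases Nat.eq_zero_or_pos m with h | h
    exacts [⟨0, Or.inl ⟨h, rfl⟩⟩, ⟨1, Or.inr ⟨h, rfl⟩⟩]
  -- The chain `0 → k - 1 → k - 2 → ⋯ → 1 → k + 1`, where `k = 2 * m + 1`.
  let R₁ : Fin (2 * m + 1 + 2) → Fin (2 * m + 1 + 2) → Prop := fun i j =>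
    (2 ≤ j.val ∧ j.val < 2 * m + 1 ∧ i.val + 1 = j.val) ∨
    (0 < m ∧ j.val = 0 ∧ i.val = 2 * m) ∨ (j.val = u ∧ i.val = 2 * m + 2)
  -- The chain `k → 1 → 3 → ⋯ → k - 2 → 0 → 2 → ⋯ → k - 1`.
  let R₂ : Fin (2 * m + 1 + 2) → Fin (2 * m + 1 + 2) → Prop := fun i j =>
    (j.val + 2 < 2 * m + 1 ∧ i.val = j.val + 2) ∨
    (j.val + 2 = 2 * m + 1 ∧ i.val = 0) ∨ (j.val = 2 * m + 1 ∧ i.val = u)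
  let R : Fin (2 * m + 1 + 2) → Fin (2 * m + 1 + 2) → Prop := fun i j =>
    i.val = j.val + 1 ∧ j.val + 1 ≠ 2 * m + 1
  have hmul : relationMatrix F R = relationMatrix F R₁ * relationMatrix F R₂ := by
    rw [relationMatrix_mul (by intro l l' j h h'; ext; simp only [R₂] at h h'; omega)]
    congr 1
    ext i j
    simp only [R, R₁, R₂]
    constructor
    · rintro ⟨h₁, h₂⟩
      by_cases h₃ : j.val + 2 < 2 * m + 1
      · exact ⟨⟨j.val + 2, by omega⟩, by dsimp only; omega, by dsimp only; omega⟩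
      by_cases h₄ : j.val + 2 = 2 * m + 1
      · exact ⟨⟨0, by omega⟩, by dsimp only; omega, by dsimp only; omega⟩
      · exact ⟨⟨u, by omega⟩, by dsimp only; omega, by dsimp only; omega⟩
    · rintro ⟨l, h₁, h₂⟩
      omega
  let a : Fin (2 * m + 1 + 2) := ⟨2 * m, by omega⟩
  let b : Fin (2 * m + 1 + 2) := ⟨2 * m + 1, by omega⟩
  let c : Fin (2 * m + 1 + 2) := ⟨2 * m + 2, by omega⟩
  have hcard : ∀ x y : Fin (2 * m + 1 + 2), x ≠ y →
      (({x, y} : Finset (Fin (2 * m + 1 + 2)))ᶜ).card = 2 * m + 1 := by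
    intro x y h
    rw [Finset.card_compl, Finset.card_pair h, Fintype.card_fin]
    omega
  have hac : (({a, c} : Finset (Fin (2 * m + 1 + 2)))ᶜ).card = 2 * m + 1 :=
    hcard a c (by simp [a, c])
  have hbc : (({b, c} : Finset (Fin (2 * m + 1 + 2)))ᶜ).card = 2 * m + 1 :=
    hcard b c (by simp [b, c])
  have hR : 2 * m + 1 ≤ (relationMatrix F R).rank := by
    refine hac.ge.trans (card_le_rank_relationMatrix _ ?_ ?_ ?_)
    · intro j
      simp only [R, a, c, Finset.mem_compl, Finset.mem_insert, Finset.mem_singleton, Fin.ext_iff]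
      constructor
      · rintro ⟨i, h⟩
        omega
      · intro h
        exact ⟨⟨j.val + 1, by omega⟩, rfl, by omega⟩
    · intro i i' j h h'
      simp only [R] at h h'
      omega
    · intro i j j' h h'
      simp only [R] at h h'
      omega
  have hR₁ : (relationMatrix F R₁).rank ≤ 2 * m + 1 := by
    refine (rank_relationMatrix_le_of_domain _ ?_).trans hbc.le
    intro i j h
    simp only [R₁] at h
    simp only [b, c, Finset.mem_compl, Finset.mem_insert, Finset.mem_singleton, Fin.ext_iff]
    omega
  have hR₂ : (relationMatrix F R₂).rank ≤ 2 * m + 1 := by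
    refine (rank_relationMatrix_le_of_domain _ ?_).trans hac.le
    intro i j h
    simp only [R₂] at h
    simp only [a, c, Finset.mem_compl, Finset.mem_insert, Finset.mem_singleton, Fin.ext_iff]
    omega
  have hle₁ : (relationMatrix F R).rank ≤ (relationMatrix F R₁).rank :=
    hmul ▸ Matrix.rank_mul_le_left _ _
  have hle₂ : (relationMatrix F R).rank ≤ (relationMatrix F R₂).rank :=
    hmul ▸ Matrix.rank_mul_le_right _ _
  rw [reindex_fromBlocks_jordanBlock0]
  refine ⟨relationMatrix F R₁, relationMatrix F R₂, ?_, ?_, hmul, by omega, by omega,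
    le_antisymm (hle₁.trans hR₁) hR⟩
  · refine isNilpotent_relationMatrix (fun j => if j.val = 0 then 0 else
      if j.val < 2 * m + 1 then 2 * m + 1 - j.val else 2 * m + 2) fun i j h => ?_
    simp only [R₁] at h
    split_ifs <;> omega
  · refine isNilpotent_relationMatrix (fun j => if j.val = 2 * m + 1 then 0 else
      if j.val % 2 = 1 then (j.val + 1) / 2 else j.val / 2 + m + 1) fun i j h => ?_
    simp only [R₂] at h
    split_ifs <;> omega
end

section
/- Let F be a field. The 9×9 block matrix over F with block rows partitioned as (2, 7) and block columns partitioned as (7, 2), whose top-left 2×7 block is zero, top-right 2×2 block is J_2(0), bottom-left 7×7 block is J_7(0), and bottom-right 7×2 block is zero, is NOT nilpotent. -/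
/-- The `9 × 9` block matrix `[[0, J_2(0)], [J_7(0), 0]]` (row partition `(2,7)`,
column partition `(7,2)`) is not nilpotent; this witnesses the error in Wu's
original factorization of `Dg[J_7(0), J_2(0)]`. -/
theorem block_matrix_j7_j2_not_nilpotent (F : Type*) [Field F] :
    ¬ IsNilpotent
        (Matrix.reindex (finSumFinEquiv : Fin 2 ⊕ Fin 7 ≃ Fin 9)
          (finSumFinEquiv : Fin 7 ⊕ Fin 2 ≃ Fin 9)
          (Matrix.fromBlocks (0 : Matrix (Fin 2) (Fin 7) F) (jordanBlock0 F 2)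
            (jordanBlock0 F 7) (0 : Matrix (Fin 7) (Fin 2) F))) := by
  rintro ⟨n, hn⟩
  -- The matrix permutes the basis vectors `e₁ → e₄ → e₇ → e₁`, so it fixes their sum.
  set v : Fin 9 → F := ![0, 1, 0, 0, 1, 0, 0, 1, 0] with hv
  set M := Matrix.reindex (finSumFinEquiv : Fin 2 ⊕ Fin 7 ≃ Fin 9)
    (finSumFinEquiv : Fin 7 ⊕ Fin 2 ≃ Fin 9)
    (Matrix.fromBlocks (0 : Matrix (Fin 2) (Fin 7) F) (jordanBlock0 F 2)
      (jordanBlock0 F 7) (0 : Matrix (Fin 7) (Fin 2) F)) with hM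
  have hfix : Matrix.mulVec M v = v := by
    funext i
    obtain ⟨i, rfl⟩ := (finSumFinEquiv : Fin 2 ⊕ Fin 7 ≃ Fin 9).surjective i
    rw [Matrix.mulVec, dotProduct,
      ← (finSumFinEquiv : Fin 7 ⊕ Fin 2 ≃ Fin 9).sum_comp, Fintype.sum_sum_type]
    rcases i with i | i <;> fin_cases i <;>
      simp [hM, hv, jordanBlock0, Fin.sum_univ_succ] <;> rfl
  have hpow : ∀ m : ℕ, Matrix.mulVec (M ^ m) v = v := by
    intro m
    induction m with
    | zero => simp
    | succ m ih => rw [pow_succ, ← Matrix.mulVec_mulVec, hfix, ih]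
  have h := congrFun (hpow n) 1
  rw [hn, Matrix.zero_mulVec] at h
  simp [hv] at h
end

section
/- Let F be a field and n a positive integer with n ≠ 2. Every nilpotent n×n matrix N over F is similar over F to a product N₁N₂ of two nilpotent n×n matrices, where the first row and the last column of the left factor N₁ are both the zero vector, and the last row of the right factor N₂ is either the zero vector or the vector e₁ᵀ (the row vector with a one in the first entry and zeros elsewhere). -/
open Module

/-- `N` is a product `A * B` of two nilpotent endomorphisms such that the kernel of `A` is not
contained in the range of `B`, witnessed by a vector `e` and a functional `ψ`. -/
def HasNilpotentFactorization {F V : Type*} [Field F] [AddCommGroup V] [Module F V]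
    (N : End F V) : Prop :=
  ∃ (A B : End F V) (e : V) (ψ : Dual F V), IsNilpotent A ∧ IsNilpotent B ∧ N = A * B ∧
    A e = 0 ∧ ψ ∘ₗ B = 0 ∧ ψ e = 1

/-- `N` has rank one and square zero. -/
def IsSquareZeroRankOne {F V : Type*} [Field F] [AddCommGroup V] [Module F V]
    (N : End F V) : Prop :=
  ∃ (χ : Dual F V) (v : V), χ ≠ 0 ∧ v ≠ 0 ∧ χ v = 0 ∧ N = χ.smulRight v

section
variable {F V W : Type*} [Field F] [AddCommGroup V] [Module F V] [AddCommGroup W] [Module F W]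

theorem HasNilpotentFactorization.conj {N : End F V} (h : HasNilpotentFactorization N)
    (T : V ≃ₗ[F] W) : HasNilpotentFactorization (T.conj N) := by
  obtain ⟨A, B, e, ψ, hA, hB, rfl, hAe, hψB, hψe⟩ := h
  refine ⟨T.conj A, T.conj B, T e, ψ ∘ₗ T.symm, ?_, ?_, ?_, ?_, ?_, ?_⟩
  · exact hA.map T.conjRingEquiv
  · exact hB.map T.conjRingEquiv
  · exact map_mul T.conjRingEquiv A B
  · simp [LinearEquiv.conj_apply, hAe]
  · ext x
    simpa [LinearEquiv.conj_apply] using LinearMap.congr_fun hψB (T.symm x)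
  · simpa using hψe

theorem IsSquareZeroRankOne.conj {N : End F V} (h : IsSquareZeroRankOne N)
    (T : V ≃ₗ[F] W) : IsSquareZeroRankOne (T.conj N) := by
  obtain ⟨χ, v, hχ, hv, hχv, rfl⟩ := h
  refine ⟨χ ∘ₗ T.symm, T v, ?_, ?_, ?_, ?_⟩
  · intro h0
    apply hχ
    ext x
    simpa using LinearMap.congr_fun h0 (T x)
  · simpa using hv
  · simpa using hχv
  · ext x
    simp [LinearEquiv.conj_apply]

theorem hasNilpotentFactorization_zero [Nontrivial V] :
    HasNilpotentFactorization (0 : End F V) := by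
  obtain ⟨e, he⟩ := exists_ne (0 : V)
  obtain ⟨ψ, hψ⟩ := Projective.exists_dual_eq_one F he
  exact ⟨0, 0, e, ψ, IsNilpotent.zero, IsNilpotent.zero, by simp, by simp, by simp, hψ⟩

theorem prodMap_pow_apply (A : End F V) (B : End F W) (n : ℕ) (x : V × W) :
    ((A.prodMap B : End F (V × W)) ^ n) x = ((A ^ n) x.1, (B ^ n) x.2) := by
  induction n with
  | zero => simp
  | succ n ih => simp [pow_succ', ih]

theorem IsNilpotent.linearMap_prodMap {A : End F V} {B : End F W} (hA : IsNilpotent A)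
    (hB : IsNilpotent B) : IsNilpotent (A.prodMap B : End F (V × W)) := by
  obtain ⟨m, hm⟩ := hA
  obtain ⟨n, hn⟩ := hB
  refine ⟨m + n, LinearMap.ext fun x => ?_⟩
  rw [prodMap_pow_apply, pow_add, hm, add_comm, pow_add, hn]
  simp

theorem HasNilpotentFactorization.prodMap {N : End F V} {M : End F W}
    (hN : HasNilpotentFactorization N) (hM : HasNilpotentFactorization M) :
    HasNilpotentFactorization (N.prodMap M : End F (V × W)) := by
  obtain ⟨A, B, e, ψ, hA, hB, rfl, hAe, hψB, hψe⟩ := hN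
  obtain ⟨A', B', -, -, hA', hB', rfl, -⟩ := hM
  refine ⟨A.prodMap A', B.prodMap B', (e, 0), ψ ∘ₗ LinearMap.fst F V W,
    hA.linearMap_prodMap hA', hB.linearMap_prodMap hB', ?_, ?_, ?_, ?_⟩
  · ext <;> simp
  · simp [hAe]
  · ext x
    · simpa using LinearMap.congr_fun hψB x
    · simp
  · simpa using hψe

theorem IsSquareZeroRankOne.prodMap_hasNilpotentFactorization {M : End F V} {N : End F W}
    (hM : IsSquareZeroRankOne M) (hN : HasNilpotentFactorization N) :
    HasNilpotentFactorization (M.prodMap N : End F (V × W)) := by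
  obtain ⟨χ, v, -, hv, -, rfl⟩ := hM
  obtain ⟨A, B, e, ψ, ⟨m, hm⟩, ⟨n, hn⟩, rfl, hAe, hψB, hψe⟩ := hN
  obtain ⟨α, hα⟩ := Projective.exists_dual_eq_one F hv
  set A' : End F (V × W) := LinearMap.prod ((ψ.smulRight v) ∘ₗ LinearMap.snd F V W)
    (A ∘ₗ LinearMap.snd F V W) with hA'
  set B' : End F (V × W) := LinearMap.prod 0
    (B ∘ₗ LinearMap.snd F V W + (χ.smulRight e) ∘ₗ LinearMap.fst F V W) with hB'
  have hApow (k : ℕ) (x : V × W) :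
      (A' ^ (k + 1)) x = (ψ ((A ^ k) x.2) • v, (A ^ (k + 1)) x.2) := by
    induction k with
    | zero => simp [hA']
    | succ k ih =>
      rw [pow_succ', Module.End.mul_apply, ih, pow_succ' A (k + 1)]
      simp [hA']
  have hBpow (k : ℕ) (x : V × W) : (B' ^ (k + 1)) x = (0, (B ^ k) (B x.2 + χ x.1 • e)) := by
    induction k with
    | zero => simp [hB']
    | succ k ih =>
      rw [pow_succ', Module.End.mul_apply, ih, pow_succ' B k]
      simp [hB']
  refine ⟨A', B', (v, 0), α ∘ₗ LinearMap.fst F V W, ⟨m + 1, ?_⟩, ⟨n + 1, ?_⟩, ?_, ?_, ?_, ?_⟩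
  · refine LinearMap.ext fun x => ?_
    rw [hApow, pow_succ', hm]
    simp
  · refine LinearMap.ext fun x => ?_
    rw [hBpow, hn]
    simp
  · refine LinearMap.ext fun x => ?_
    have := LinearMap.congr_fun hψB x.2
    simp only [LinearMap.comp_apply, LinearMap.zero_apply] at this
    simp [hA', hB', this, hAe, hψe]
  · simp [hA']
  · ext <;> simp [hB']
  · simpa using hα

theorem IsSquareZeroRankOne.prodMap {M : End F V} {N : End F W}
    (hM : IsSquareZeroRankOne M) (hN : IsSquareZeroRankOne N) :
    HasNilpotentFactorization (M.prodMap N : End F (V × W)) := by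
  obtain ⟨χ, v, -, hv, hχv, rfl⟩ := hM
  obtain ⟨ξ, w, hξ, hw, hξw, rfl⟩ := hN
  obtain ⟨α, hα⟩ := Projective.exists_dual_eq_one F hv
  obtain ⟨β, hβ⟩ := Projective.exists_dual_eq_one F hw
  obtain ⟨g, hg⟩ : ∃ g, ξ g = 1 := LinearMap.surjective hξ 1
  refine ⟨LinearMap.prod ((ξ.smulRight v) ∘ₗ LinearMap.snd F V W)
      ((α.smulRight w) ∘ₗ LinearMap.fst F V W),
    LinearMap.prod ((ξ.smulRight v) ∘ₗ LinearMap.snd F V W)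
      ((χ.smulRight g) ∘ₗ LinearMap.fst F V W), (0, w),
    (β - β g • ξ) ∘ₗ LinearMap.snd F V W, ⟨3, ?_⟩, ⟨3, ?_⟩, ?_, ?_, ?_, ?_⟩
  · refine LinearMap.ext fun x => ?_
    simp [pow_succ, hα, hξw]
  · refine LinearMap.ext fun x => ?_
    simp [pow_succ, hg, hχv]
  · refine LinearMap.ext fun x => ?_
    simp [hα, hg]
  · simp [hξw]
  · refine LinearMap.ext fun x => ?_
    simp [hg]
  · simp [hβ, hξw]


theorem mem_maxGenEigenspace_zero_of_apply {A : End F V} {x : V}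
    (h : A x ∈ A.maxGenEigenspace 0) : x ∈ A.maxGenEigenspace 0 := by
  simp only [End.mem_maxGenEigenspace, zero_smul, sub_zero] at h ⊢
  obtain ⟨k, hk⟩ := h
  exact ⟨k + 1, by rwa [pow_succ]⟩

theorem isNilpotent_of_basis_mem {ι : Type*} [Finite ι] (b : Basis ι F V) {A : End F V}
    (h : ∀ i, b i ∈ A.maxGenEigenspace 0) : IsNilpotent A := by
  have : Module.Finite F V := Module.Finite.of_basis b
  have htop : A.maxGenEigenspace 0 = ⊤ := by
    rw [eq_top_iff, ← b.span_eq, Submodule.span_le]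
    rintro _ ⟨i, rfl⟩
    exact h i
  refine End.isNilpotent_iff_of_finite.2 fun x => ?_
  have hx : x ∈ A.maxGenEigenspace 0 := htop ▸ Submodule.mem_top
  simpa only [End.mem_maxGenEigenspace, zero_smul, sub_zero] using hx

/-- `f 0, …, f (k - 1)` is a basis of `V` which `N` shifts, the last vector being sent to zero. -/
structure IsJordanChain (N : End F V) (k : ℕ) (f : ℕ → V) : Prop where
  apply_eq : ∀ i, N (f i) = f (i + 1)
  eq_zero : ∀ i, k ≤ i → f i = 0
  exists_basis : ∃ b : Basis (Fin k) F V, ∀ i, b i = f i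

theorem IsJordanChain.exists_linearMap {N : End F V} {k : ℕ} {f : ℕ → V}
    (h : IsJordanChain N k f) {M : Type*} [AddCommGroup M] [Module F M] (g : ℕ → M) :
    ∃ A : V →ₗ[F] M, ∀ i < k, A (f i) = g i := by
  obtain ⟨b, hb⟩ := h.exists_basis
  refine ⟨b.constr F fun i => g i, fun i hi => ?_⟩
  simpa [hb] using b.constr_basis F (fun i => g i) ⟨i, hi⟩

theorem IsJordanChain.ext {N : End F V} {k : ℕ} {f : ℕ → V}
    (h : IsJordanChain N k f) {M : Type*} [AddCommGroup M] [Module F M] {A B : V →ₗ[F] M}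
    (hAB : ∀ i < k, A (f i) = B (f i)) : A = B := by
  obtain ⟨b, hb⟩ := h.exists_basis
  refine b.ext fun i => ?_
  rw [hb]
  exact hAB i i.2

theorem IsJordanChain.isNilpotent {N : End F V} {k : ℕ} {f : ℕ → V}
    (h : IsJordanChain N k f) {A : End F V}
    (hA : ∀ i < k, f i ∈ A.maxGenEigenspace 0) : IsNilpotent A := by
  obtain ⟨b, hb⟩ := h.exists_basis
  refine isNilpotent_of_basis_mem b fun i => ?_
  rw [hb]
  exact hA i i.2

theorem IsJordanChain.isSquareZeroRankOne {N : End F V} {f : ℕ → V}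
    (h : IsJordanChain N 2 f) : IsSquareZeroRankOne N := by
  obtain ⟨b, hb⟩ := h.exists_basis
  have hf0 : f 0 = b 0 := (hb 0).symm
  have hf1 : f 1 = b 1 := (hb 1).symm
  refine ⟨b.coord 0, f 1, ?_, ?_, ?_, h.ext fun i hi => ?_⟩
  · intro h0
    simpa using LinearMap.congr_fun h0 (b 0)
  · rw [hf1]
    exact b.ne_zero 1
  · simp [hf1]
  · have := h.eq_zero 2 le_rfl
    interval_cases i
    · rw [h.apply_eq]
      simp [hf0]
    · rw [h.apply_eq]
      simp [this, hf1]

theorem IsJordanChain.hasNilpotentFactorization_of_odd {N : End F V} {k : ℕ} {f : ℕ → V}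
    (h : IsJordanChain N k f) (hk : 3 ≤ k) (hodd : Odd k) : HasNilpotentFactorization N := by
  obtain ⟨c, hc⟩ := hodd
  obtain ⟨(A : End F V), hA⟩ := h.exists_linearMap
    fun i => if i = 0 then f (k - 1) else if i = 1 then 0 else f (i - 1)
  obtain ⟨(B : End F V), hB⟩ := h.exists_linearMap fun i => if i = k - 2 then f 0 else f (i + 2)
  obtain ⟨ψ, hψ⟩ := h.exists_linearMap fun i => if i = 1 then (1 : F) else 0
  have hA0 : A (f 0) = f (k - 1) := by simp [hA 0 (by omega)]
  have hA1 : A (f 1) = 0 := by simp [hA 1 (by omega)]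
  have hAs (i : ℕ) (hi : i + 2 < k) : A (f (i + 2)) = f (i + 1) := by simp [hA _ hi]
  have hBl : B (f (k - 2)) = f 0 := by simp [hB (k - 2) (by omega)]
  have hBs (i : ℕ) (hi : i < k) (hi' : i ≠ k - 2) : B (f i) = f (i + 2) := by simp [hB _ hi, hi']
  refine ⟨A, B, f 1, ψ, h.isNilpotent ?_, h.isNilpotent ?_, ?_, hA1, ?_, by simp [hψ 1 (by omega)]⟩
  · have hpos (i : ℕ) (hi : i + 1 < k) : f (i + 1) ∈ A.maxGenEigenspace 0 := by
      induction i with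
      | zero => exact mem_maxGenEigenspace_zero_of_apply (by simp [hA1])
      | succ i ih => exact mem_maxGenEigenspace_zero_of_apply (hAs i hi ▸ ih (by omega))
    rintro (_ | i) hi
    · refine mem_maxGenEigenspace_zero_of_apply ?_
      rw [hA0]
      simpa [show k - 2 + 1 = k - 1 by omega] using hpos (k - 2) (by omega)
    · exact hpos i hi
  · have heven (t : ℕ) : ∀ i, k ≤ 2 * i + t → f (2 * i) ∈ B.maxGenEigenspace 0 := by
      induction t with
      | zero => intro i hi; simp [h.eq_zero (2 * i) hi]
      | succ t ih =>
        intro i hi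
        by_cases hik : k ≤ 2 * i
        · simp [h.eq_zero _ hik]
        · refine mem_maxGenEigenspace_zero_of_apply ?_
          rw [hBs _ (by omega) (by omega)]
          exact ih (i + 1) (by omega)
    have hall (t : ℕ) : ∀ i, k ≤ i + t → f i ∈ B.maxGenEigenspace 0 := by
      induction t with
      | zero => intro i hi; simp [h.eq_zero i hi]
      | succ t ih =>
        intro i hi
        by_cases hik : k ≤ i
        · simp [h.eq_zero _ hik]
        · refine mem_maxGenEigenspace_zero_of_apply ?_
          by_cases hil : i = k - 2
          · rw [hil, hBl]
            exact heven k 0 (by omega)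
          · rw [hBs _ (by omega) hil]
            exact ih (i + 2) (by omega)
    exact fun i hi => hall k i (by omega)
  · refine h.ext fun i hi => ?_
    rw [h.apply_eq, End.mul_apply]
    by_cases hil : i = k - 2
    · rw [hil, hBl, hA0, show k - 2 + 1 = k - 1 by omega]
    · rw [hBs i hi hil]
      by_cases hik : i + 2 < k
      · rw [hAs i hik]
      · rw [h.eq_zero (i + 2) (by omega), h.eq_zero (i + 1) (by omega), map_zero]
  · refine h.ext fun i hi => ?_
    rw [LinearMap.comp_apply, LinearMap.zero_apply]
    by_cases hil : i = k - 2
    · rw [hil, hBl]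
      simp [hψ 0 (by omega)]
    · rw [hBs i hi hil]
      by_cases hik : i + 2 < k
      · simp [hψ _ hik]
      · rw [h.eq_zero (i + 2) (by omega), map_zero]

theorem IsJordanChain.hasNilpotentFactorization_four {N : End F V} {f : ℕ → V}
    (h : IsJordanChain N 4 f) : HasNilpotentFactorization N := by
  obtain ⟨(A : End F V), hA⟩ := h.exists_linearMap
    fun i => if i = 0 then f 1 + (f 1 + f 2 + f 3) else if i = 1 then f 1 + f 3 else
      if i = 2 then -(f 1 + f 2 + f 3) else f 2
  obtain ⟨(B : End F V), hB⟩ := h.exists_linearMap fun i => if i = 0 then f 0 + f 2 else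
    if i = 1 then f 3 else if i = 2 then f 1 - (f 0 + f 2) else 0
  obtain ⟨ψ, hψ⟩ := h.exists_linearMap fun i => if i = 2 then (1 : F) else if i = 0 then -1 else 0
  have hA0 : A (f 0) = f 1 + (f 1 + f 2 + f 3) := by simp [hA]
  have hA1 : A (f 1) = f 1 + f 3 := by simp [hA]
  have hA2 : A (f 2) = -(f 1 + f 2 + f 3) := by simp [hA]
  have hA3 : A (f 3) = f 2 := by simp [hA]
  have hB0 : B (f 0) = f 0 + f 2 := by simp [hB]
  have hB1 : B (f 1) = f 3 := by simp [hB]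
  have hB2 : B (f 2) = f 1 - (f 0 + f 2) := by simp [hB]
  have hB3 : B (f 3) = 0 := by simp [hB]
  have hψ0 : ψ (f 0) = -1 := by simp [hψ]
  have hψ1 : ψ (f 1) = 0 := by simp [hψ]
  have hψ2 : ψ (f 2) = 1 := by simp [hψ]
  have hψ3 : ψ (f 3) = 0 := by simp [hψ]
  have hker : A (f 1 + f 2 + f 3) = 0 := by
    simp only [map_add, hA1, hA2, hA3]
    abel
  refine ⟨A, B, f 1 + f 2 + f 3, ψ, h.isNilpotent ?_, h.isNilpotent ?_, ?_, hker, ?_, ?_⟩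
  · have g123 : f 1 + f 2 + f 3 ∈ A.maxGenEigenspace 0 :=
      mem_maxGenEigenspace_zero_of_apply (by simp [hker])
    have g2 : f 2 ∈ A.maxGenEigenspace 0 :=
      mem_maxGenEigenspace_zero_of_apply (hA2 ▸ neg_mem g123)
    have g3 : f 3 ∈ A.maxGenEigenspace 0 := mem_maxGenEigenspace_zero_of_apply (hA3 ▸ g2)
    have g1 : f 1 ∈ A.maxGenEigenspace 0 := by
      have := sub_mem (sub_mem g123 g3) g2
      rwa [add_sub_cancel_right, add_sub_cancel_right] at this
    have g0 : f 0 ∈ A.maxGenEigenspace 0 :=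
      mem_maxGenEigenspace_zero_of_apply (hA0 ▸ add_mem g1 g123)
    intro i hi
    interval_cases i <;> assumption
  · have g3 : f 3 ∈ B.maxGenEigenspace 0 := mem_maxGenEigenspace_zero_of_apply (by simp [hB3])
    have g1 : f 1 ∈ B.maxGenEigenspace 0 := mem_maxGenEigenspace_zero_of_apply (hB1 ▸ g3)
    have g02 : f 0 + f 2 ∈ B.maxGenEigenspace 0 :=
      mem_maxGenEigenspace_zero_of_apply (by simpa [hB0, hB2] using g1)
    have g0 : f 0 ∈ B.maxGenEigenspace 0 := mem_maxGenEigenspace_zero_of_apply (hB0 ▸ g02)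
    have g2 : f 2 ∈ B.maxGenEigenspace 0 :=
      mem_maxGenEigenspace_zero_of_apply (hB2 ▸ sub_mem g1 g02)
    intro i hi
    interval_cases i <;> assumption
  · refine h.ext fun i hi => ?_
    rw [h.apply_eq, End.mul_apply]
    have h4 := h.eq_zero 4 le_rfl
    interval_cases i <;> simp [hA0, hA1, hA2, hA3, hB0, hB1, hB2, hB3, h4] <;> abel
  · refine h.ext fun i hi => ?_
    rw [LinearMap.comp_apply, LinearMap.zero_apply]
    interval_cases i <;> simp [hB0, hB1, hB2, hB3, hψ0, hψ1, hψ2, hψ3]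
  · simp [hψ1, hψ2, hψ3]

theorem IsJordanChain.hasNilpotentFactorization_of_even {N : End F V} {k : ℕ} {f : ℕ → V}
    (h : IsJordanChain N k f) (hk : 6 ≤ k) (heven : Even k) : HasNilpotentFactorization N := by
  obtain ⟨c, hc⟩ := heven
  obtain ⟨(A : End F V), hA⟩ := h.exists_linearMap fun i =>
    if i = 0 then f 1 + f (k - 2) else if i = 1 then f (k - 1) else if i = 2 then -f (k - 2) else
      if i = 4 then f 3 + f 1 else f (i - 1)
  obtain ⟨(B : End F V), hB⟩ := h.exists_linearMap fun i =>
    if i = 0 then f 0 + f 2 else if i = 2 then f 4 - (f 0 + f 2) else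
      if i = k - 2 then f 1 else f (i + 2)
  obtain ⟨ψ, hψ⟩ := h.exists_linearMap fun i => if i = 2 then (1 : F) else if i = 0 then -1 else 0
  have hA0 : A (f 0) = f 1 + f (k - 2) := by simp [hA 0 (by omega)]
  have hA1 : A (f 1) = f (k - 1) := by simp [hA 1 (by omega)]
  have hA2 : A (f 2) = -f (k - 2) := by simp [hA 2 (by omega)]
  have hA3 : A (f 3) = f 2 := by simp [hA 3 (by omega)]
  have hA4 : A (f 4) = f 3 + f 1 := by simp [hA 4 (by omega)]
  have hAs (i : ℕ) (hi : i + 5 < k) : A (f (i + 5)) = f (i + 4) := by simp [hA _ hi]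
  have hAl : A (f (k - 1)) = f (k - 2) := by
    simpa [show k - 6 + 5 = k - 1 by omega, show k - 6 + 4 = k - 2 by omega]
      using hAs (k - 6) (by omega)
  have hB0 : B (f 0) = f 0 + f 2 := by simp [hB 0 (by omega)]
  have hB2 : B (f 2) = f 4 - (f 0 + f 2) := by simp [hB 2 (by omega)]
  have hBl : B (f (k - 2)) = f 1 := by
    simp [hB (k - 2) (by omega), show k - 2 ≠ 0 by omega, show k - 2 ≠ 2 by omega]
  have hBs (i : ℕ) (hi : i < k) (h0 : i ≠ 0) (h2 : i ≠ 2) (hl : i ≠ k - 2) :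
      B (f i) = f (i + 2) := by simp [hB _ hi, h0, h2, hl]
  have hψ0 : ψ (f 0) = -1 := by simp [hψ 0 (by omega)]
  have hψ2 : ψ (f 2) = 1 := by simp [hψ 2 (by omega)]
  have hψs (i : ℕ) (h0 : i ≠ 0) (h2 : i ≠ 2) : ψ (f i) = 0 := by
    by_cases hi : i < k
    · simp [hψ i hi, h0, h2]
    · rw [h.eq_zero i (by omega), map_zero]
  have hker : A (f 2 + f (k - 1)) = 0 := by simp [hA2, hAl]
  refine ⟨A, B, f 2 + f (k - 1), ψ, h.isNilpotent ?_, h.isNilpotent ?_, ?_, hker, ?_, ?_⟩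
  · have gker : f 2 + f (k - 1) ∈ A.maxGenEigenspace 0 :=
      mem_maxGenEigenspace_zero_of_apply (by simp [hker])
    have g31 : f 3 + f 1 ∈ A.maxGenEigenspace 0 :=
      mem_maxGenEigenspace_zero_of_apply (by simpa [hA3, hA1] using gker)
    have gs (i : ℕ) (hi : i + 4 < k) : f (i + 4) ∈ A.maxGenEigenspace 0 := by
      induction i with
      | zero => exact mem_maxGenEigenspace_zero_of_apply (hA4 ▸ g31)
      | succ i ih => exact mem_maxGenEigenspace_zero_of_apply (hAs i hi ▸ ih (by omega))
    have gl : f (k - 2) ∈ A.maxGenEigenspace 0 := by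
      simpa [show k - 6 + 4 = k - 2 by omega] using gs (k - 6) (by omega)
    have gl' : f (k - 1) ∈ A.maxGenEigenspace 0 := mem_maxGenEigenspace_zero_of_apply (hAl ▸ gl)
    have g1 : f 1 ∈ A.maxGenEigenspace 0 := mem_maxGenEigenspace_zero_of_apply (hA1 ▸ gl')
    have g2 : f 2 ∈ A.maxGenEigenspace 0 :=
      mem_maxGenEigenspace_zero_of_apply (hA2 ▸ neg_mem gl)
    have g3 : f 3 ∈ A.maxGenEigenspace 0 := mem_maxGenEigenspace_zero_of_apply (hA3 ▸ g2)
    have g0 : f 0 ∈ A.maxGenEigenspace 0 :=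
      mem_maxGenEigenspace_zero_of_apply (hA0 ▸ add_mem g1 gl)
    rintro (_ | _ | _ | _ | i) hi
    · exact g0
    · exact g1
    · exact g2
    · exact g3
    · exact gs i hi
  · have godd (t : ℕ) : ∀ i, k ≤ 2 * i + 1 + t → f (2 * i + 1) ∈ B.maxGenEigenspace 0 := by
      induction t with
      | zero => intro i hi; simp [h.eq_zero _ hi]
      | succ t ih =>
        intro i hi
        by_cases hik : k ≤ 2 * i + 1
        · simp [h.eq_zero _ hik]
        · refine mem_maxGenEigenspace_zero_of_apply ?_
          rw [hBs _ (by omega) (by omega) (by omega) (by omega)]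
          exact ih (i + 1) (by omega)
    have gs (t : ℕ) : ∀ i, 3 ≤ i → k ≤ i + t → f i ∈ B.maxGenEigenspace 0 := by
      induction t with
      | zero => intro i _ hi; simp [h.eq_zero i hi]
      | succ t ih =>
        intro i hi3 hi
        by_cases hik : k ≤ i
        · simp [h.eq_zero _ hik]
        · refine mem_maxGenEigenspace_zero_of_apply ?_
          by_cases hil : i = k - 2
          · rw [hil, hBl]
            exact godd k 0 (by omega)
          · rw [hBs _ (by omega) (by omega) (by omega) hil]
            exact ih (i + 2) (by omega) (by omega)
    have g4 : f 4 ∈ B.maxGenEigenspace 0 := gs k 4 (by omega) (by omega)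
    have g02 : f 0 + f 2 ∈ B.maxGenEigenspace 0 :=
      mem_maxGenEigenspace_zero_of_apply (by simpa [hB0, hB2] using g4)
    have g0 : f 0 ∈ B.maxGenEigenspace 0 := mem_maxGenEigenspace_zero_of_apply (hB0 ▸ g02)
    have g2 : f 2 ∈ B.maxGenEigenspace 0 :=
      mem_maxGenEigenspace_zero_of_apply (hB2 ▸ sub_mem g4 g02)
    rintro (_ | _ | _ | i) hi
    · exact g0
    · exact godd k 0 (by omega)
    · exact g2
    · exact gs k _ (by omega) (by omega)
  · refine h.ext fun i hi => ?_
    rw [h.apply_eq, End.mul_apply]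
    by_cases h0 : i = 0
    · simp [h0, hB0, hA0, hA2]
    by_cases h2 : i = 2
    · simp [h2, hB2, hA0, hA2, hA4]
    by_cases hl : i = k - 2
    · rw [hl, hBl, hA1, show k - 2 + 1 = k - 1 by omega]
    rw [hBs i hi h0 h2 hl]
    by_cases h1 : i = 1
    · simp [h1, hA3]
    by_cases hik : i + 2 < k
    · obtain ⟨j, rfl⟩ : ∃ j, i = j + 3 := ⟨i - 3, by omega⟩
      exact (hAs j hik).symm
    · rw [h.eq_zero (i + 2) (by omega), h.eq_zero (i + 1) (by omega), map_zero]
  · refine h.ext fun i hi => ?_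
    rw [LinearMap.comp_apply, LinearMap.zero_apply]
    by_cases h0 : i = 0
    · simp [h0, hB0, hψ0, hψ2]
    by_cases h2 : i = 2
    · simp [h2, hB2, hψ0, hψ2, hψs 4]
    by_cases hl : i = k - 2
    · rw [hl, hBl, hψs 1 (by omega) (by omega)]
    · rw [hBs i hi h0 h2 hl, hψs _ (by omega) (by omega)]
  · rw [map_add, hψ2, hψs (k - 1) (by omega) (by omega), add_zero]

theorem IsJordanChain.hasNilpotentFactorization_or {N : End F V} {k : ℕ} {f : ℕ → V}
    (h : IsJordanChain N k f) (hk : 0 < k) :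
    HasNilpotentFactorization N ∨ k = 2 ∧ IsSquareZeroRankOne N := by
  rcases Nat.even_or_odd k with hev | hodd
  · obtain rfl | rfl | h6 : k = 2 ∨ k = 4 ∨ 6 ≤ k := by
      obtain ⟨c, hc⟩ := hev
      omega
    · exact .inr ⟨rfl, h.isSquareZeroRankOne⟩
    · exact .inl h.hasNilpotentFactorization_four
    · exact .inl (h.hasNilpotentFactorization_of_even h6 hev)
  · obtain rfl | h3 : k = 1 ∨ 3 ≤ k := by
      obtain ⟨c, hc⟩ := hodd
      omega
    · left
      have hN : N = 0 := h.ext fun i hi => by simp [h.apply_eq, h.eq_zero (i + 1) (by omega)]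
      obtain ⟨b, -⟩ := h.exists_basis
      have : Nontrivial V := ⟨b 0, 0, b.ne_zero 0⟩
      exact hN ▸ hasNilpotentFactorization_zero
    · exact .inl (h.hasNilpotentFactorization_of_odd h3 hodd)

/-- A nilpotent endomorphism splits off an invariant subspace spanned by a Jordan chain of maximal
length. -/
theorem exists_isCompl_isJordanChain [Nontrivial V] {N : End F V} (hN : IsNilpotent N) :
    ∃ (U W : Submodule F V) (hU : ∀ x ∈ U, N x ∈ U) (_ : ∀ x ∈ W, N x ∈ W) (k : ℕ) (f : ℕ → U),
      IsCompl U W ∧ 0 < k ∧ IsJordanChain (N.restrict hU) k f := by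
  obtain ⟨m, hm⟩ : ∃ m, nilpotencyClass N = m + 1 :=
    Nat.exists_eq_succ_of_ne_zero (pos_nilpotencyClass_iff.2 hN).ne'
  have hm0 : N ^ (m + 1) = 0 := hm ▸ pow_nilpotencyClass hN
  have hm1 : N ^ m ≠ 0 := by
    simpa [hm] using pow_pred_nilpotencyClass hN
  have hge (i : ℕ) (hi : m < i) : N ^ i = 0 := pow_eq_zero_of_le hi hm0
  obtain ⟨v, hv⟩ : ∃ v, (N ^ m) v ≠ 0 := by
    by_contra! h
    exact hm1 (LinearMap.ext h)
  obtain ⟨φ, hφ⟩ := Projective.exists_dual_eq_one F hv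
  let Ψ : (Fin (m + 1) → F) →ₗ[F] V := Fintype.linearCombination F fun i => (N ^ (i : ℕ)) v
  let Φ : V →ₗ[F] (Fin (m + 1) → F) := LinearMap.pi fun i => φ ∘ₗ N ^ (m - i)
  have hΨs (i : Fin (m + 1)) : Ψ (Pi.single i 1) = (N ^ (i : ℕ)) v := by
    simp [Ψ, Fintype.linearCombination_apply_single]
  have hdet : IsUnit (LinearMap.toMatrix' (Φ ∘ₗ Ψ)) := by
    have hent (i j : Fin (m + 1)) :
        LinearMap.toMatrix' (Φ ∘ₗ Ψ) i j = φ ((N ^ (m - i + j : ℕ)) v) := by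
      rw [LinearMap.toMatrix'_apply, LinearMap.comp_apply, hΨs]
      simp [Φ, pow_add]
    rw [Matrix.isUnit_iff_isUnit_det, Matrix.det_of_isLowerTriangular]
    · rw [Finset.prod_eq_one]
      · exact isUnit_one
      · intro i _
        rw [hent, Nat.sub_add_cancel (by omega), hφ]
    · intro i j hij
      have hij' : i < j := hij
      rw [hent, hge _ (by omega)]
      simp
  have hbij : Function.Bijective (Φ ∘ₗ Ψ) := by
    rw [← End.isUnit_iff, ← LinearMap.isUnit_toMatrix'_iff]
    exact hdet
  have hinj : Function.Injective Ψ := Function.Injective.of_comp (f := Φ) hbij.1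
  have hmem (i : ℕ) : (N ^ i) v ∈ LinearMap.range Ψ := by
    by_cases hi : i < m + 1
    · exact ⟨_, hΨs ⟨i, hi⟩⟩
    · simp [hge i (by omega)]
  have hU : ∀ x ∈ LinearMap.range Ψ, N x ∈ LinearMap.range Ψ := by
    rintro _ ⟨c, rfl⟩
    rw [Fintype.linearCombination_apply, map_sum]
    refine sum_mem fun i _ => ?_
    rw [map_smul, ← End.mul_apply, ← pow_succ']
    exact Submodule.smul_mem _ _ (hmem _)
  have hW : ∀ x ∈ LinearMap.ker Φ, N x ∈ LinearMap.ker Φ := by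
    intro x hx
    rw [LinearMap.mem_ker] at hx ⊢
    ext i
    rcases Fin.eq_zero_or_eq_succ i with rfl | ⟨j, rfl⟩
    · simp [Φ, ← End.mul_apply, ← pow_succ, hm0]
    · have := congr_fun hx j.castSucc
      simpa [Φ, ← End.mul_apply, ← pow_succ, show m - (j + 1) + 1 = m - j by omega] using this
  refine ⟨LinearMap.range Ψ, LinearMap.ker Φ, hU, hW, m + 1, fun i => ⟨_, hmem i⟩, ⟨?_, ?_⟩,
    by omega, ⟨?_, ?_, ?_⟩⟩
  · rw [Submodule.disjoint_def]
    rintro _ ⟨c, rfl⟩ hc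
    rw [hbij.1 (a₁ := c) (a₂ := 0) (by simpa using hc), map_zero]
  · rw [codisjoint_iff, eq_top_iff]
    intro x _
    obtain ⟨c, hc⟩ := hbij.2 (Φ x)
    refine Submodule.mem_sup.2 ⟨Ψ c, ⟨c, rfl⟩, x - Ψ c, ?_, by abel⟩
    simpa [sub_eq_zero] using hc.symm
  · intro i
    ext
    simp [pow_succ']
  · intro i hi
    ext
    simp [hge i hi]
  · refine ⟨(Pi.basisFun F (Fin (m + 1))).map (LinearEquiv.ofInjective Ψ hinj), fun i => ?_⟩
    ext
    simp [hΨs]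

theorem conj_prodEquivOfIsCompl_prodMap {U W : Submodule F V} (h : IsCompl U W) {N : End F V}
    (hU : ∀ x ∈ U, N x ∈ U) (hW : ∀ x ∈ W, N x ∈ W) :
    (Submodule.prodEquivOfIsCompl U W h).conj ((N.restrict hU).prodMap (N.restrict hW)) = N := by
  refine LinearMap.ext fun x => ?_
  obtain ⟨y, rfl⟩ := (Submodule.prodEquivOfIsCompl U W h).surjective x
  simp [LinearEquiv.conj_apply]

theorem IsNilpotent.restrict_end {W : Submodule F V} {N : End F V} (hN : IsNilpotent N)
    (hW : ∀ x ∈ W, N x ∈ W) : IsNilpotent (N.restrict hW) := by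
  obtain ⟨m, hm⟩ := hN
  refine ⟨m, ?_⟩
  ext x
  rw [End.pow_restrict]
  simp [hm]

end

theorem IsNilpotent.hasNilpotentFactorization_or {F : Type*} [Field F] (n : ℕ) :
    ∀ {V : Type*} [AddCommGroup V] [Module F V] [FiniteDimensional F V] [Nontrivial V]
      {N : End F V}, IsNilpotent N → finrank F V = n →
      HasNilpotentFactorization N ∨ n = 2 ∧ IsSquareZeroRankOne N := by
  induction n using Nat.strong_induction_on with
  | _ n ih =>
    intro V _ _ _ _ N hN hn
    obtain ⟨U, W, hU, hW, k, f, hUW, hk, hf⟩ := exists_isCompl_isJordanChain hN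
    have hUk : finrank F U = k := by
      obtain ⟨b, -⟩ := hf.exists_basis
      simpa using finrank_eq_card_basis b
    have hadd := Submodule.finrank_add_eq_of_isCompl hUW
    have hconj := conj_prodEquivOfIsCompl_prodMap hUW hU hW
    rcases subsingleton_or_nontrivial W with hW0 | hW1
    · have hW0' : finrank F W = 0 := finrank_zero_of_subsingleton
      have hUtop : U = ⊤ := Submodule.eq_top_of_finrank_eq (by omega)
      have hT : (LinearEquiv.ofTop U hUtop).conj (N.restrict hU) = N := by
        ext x
        simp [LinearEquiv.conj_apply]
      rcases hf.hasNilpotentFactorization_or hk with h | ⟨h2, h⟩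
      · exact .inl (hT ▸ h.conj _)
      · exact .inr ⟨by omega, hT ▸ h.conj _⟩
    · left
      rw [← hconj]
      refine HasNilpotentFactorization.conj ?_ _
      have hWn := hN.restrict_end hW
      rcases hf.hasNilpotentFactorization_or hk with h | ⟨-, h⟩ <;>
      rcases ih (finrank F W) (by omega) hWn rfl with h' | ⟨-, h'⟩
      · exact h.prodMap h'
      · have := (h'.prodMap_hasNilpotentFactorization h).conj (LinearEquiv.prodComm F W U)
        convert this using 1
        refine LinearMap.ext fun x => ?_
        simp [LinearEquiv.conj_apply]
      · exact h.prodMap_hasNilpotentFactorization h'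
      · exact h.prodMap h'

section

variable {F V : Type*} [Field F] [AddCommGroup V] [Module F V]

theorem IsNilpotent.exists_dual_comp_eq_zero [FiniteDimensional F V] {A : End F V}
    (hA : IsNilpotent A) {e : V} (hAe : A e = 0) (hV : 1 < finrank F V) :
    ∃ φ : Dual F V, φ ≠ 0 ∧ φ ∘ₗ A = 0 ∧ φ e = 0 := by
  have hlt : LinearMap.range A ⊔ F ∙ e < ⊤ := by
    rw [lt_top_iff_ne_top]
    intro htop
    have hstep : LinearMap.range A ≤ (LinearMap.range A).map A := by
      rintro _ ⟨x, rfl⟩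
      obtain ⟨_, ⟨y, rfl⟩, z, hz, rfl⟩ := Submodule.mem_sup.1 (htop ▸ Submodule.mem_top (x := x))
      obtain ⟨c, rfl⟩ := Submodule.mem_span_singleton.1 hz
      exact ⟨A y, ⟨y, rfl⟩, by simp [hAe]⟩
    have hpow (m : ℕ) : LinearMap.range A ≤ LinearMap.range (A ^ m) := by
      induction m with
      | zero => simp [End.one_eq_id]
      | succ m ih =>
        rw [pow_succ', End.mul_eq_comp, LinearMap.range_comp]
        exact hstep.trans (Submodule.map_mono ih)
    obtain ⟨m, hm⟩ := hA
    have hA0 : LinearMap.range A = ⊥ := by simpa [hm] using hpow m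
    rw [hA0, bot_sup_eq] at htop
    have := (finrank_span_le_card (R := F) ({e} : Set V)).trans_eq (Set.toFinset_card _)
    rw [htop, finrank_top, Set.card_singleton] at this
    omega
  obtain ⟨φ, hφ, hφ0⟩ := Submodule.exists_dual_map_eq_bot_of_lt_top hlt inferInstance
  have hφ' (x : V) (hx : x ∈ LinearMap.range A ⊔ F ∙ e) : φ x = 0 := by
    have := Submodule.mem_map_of_mem (f := φ) hx
    simpa [hφ0] using this
  exact ⟨φ, hφ, LinearMap.ext fun x => hφ' _ (Submodule.mem_sup_left ⟨x, rfl⟩),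
    hφ' _ (Submodule.mem_sup_right (Submodule.mem_span_singleton_self e))⟩

/-- There are coordinates on `V` whose first and last are `φ` and `ψ`, and in which `e` is the last
standard basis vector. -/
theorem exists_linearEquiv_first_last [FiniteDimensional F V] {m : ℕ}
    (hV : finrank F V = m + 2) {φ ψ : Dual F V} {e : V} (hφ : φ ≠ 0) (hφe : φ e = 0)
    (hψe : ψ e = 1) :
    ∃ T : V ≃ₗ[F] (Fin (m + 2) → F), (∀ x, T x 0 = φ x) ∧ (∀ x, T x (Fin.last _) = ψ x) ∧
      T e = Pi.single (Fin.last _) 1 := by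
  obtain ⟨d₀, hd₀⟩ : ∃ d, φ d = 1 := LinearMap.surjective hφ 1
  obtain ⟨d, hφd, hψd⟩ : ∃ d, φ d = 1 ∧ ψ d = 0 :=
    ⟨d₀ - ψ d₀ • e, by simp [hd₀, hφe], by simp [hψe]⟩
  let p : V →ₗ[F] F × F := φ.prod ψ
  have hp : LinearMap.range p = ⊤ := by
    rw [LinearMap.range_eq_top]
    rintro ⟨a, c⟩
    exact ⟨a • d + c • e, by simp [p, hφd, hψd, hφe, hψe]⟩
  have hker : finrank F (LinearMap.ker p) = m := by
    have := LinearMap.finrank_range_add_finrank_ker p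
    rw [hp, finrank_top, finrank_prod, finrank_self, hV] at this
    omega
  let b := (finBasisOfFinrankEq F _ hker).equivFun
  let q : V →ₗ[F] LinearMap.ker p := LinearMap.codRestrict _
    (LinearMap.id - φ.smulRight d - ψ.smulRight e)
    (fun x => by simp [p, hφd, hψd, hφe, hψe])
  have hq_coe (x : V) : (q x : V) = x - φ x • d - ψ x • e := rfl
  let T : V →ₗ[F] (Fin (m + 2) → F) := LinearMap.pi fun i =>
    Fin.cases φ (fun j => Fin.lastCases ψ (fun l => LinearMap.proj l ∘ₗ b.toLinearMap ∘ₗ q) j) i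
  have hT0 (x : V) : T x 0 = φ x := rfl
  have hTl (x : V) : T x (Fin.last _) = ψ x := by
    simp [T, ← Fin.succ_last]
  have hTm (x : V) (l : Fin m) : T x l.castSucc.succ = b (q x) l := by
    simp [T]
  have hinj : Function.Injective T := by
    rw [← LinearMap.ker_eq_bot, LinearMap.ker_eq_bot']
    intro x hx
    have h0 : φ x = 0 := by rw [← hT0, hx]; rfl
    have hl : ψ x = 0 := by rw [← hTl, hx]; rfl
    have hq : b (q x) = 0 := funext fun l => by rw [← hTm, hx]; rfl
    have hq' : q x = 0 := by simpa using hq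
    simpa [hq_coe, h0, hl] using congr_arg Subtype.val hq'
  refine ⟨LinearMap.linearEquivOfInjective T hinj (by simp [hV]), hT0, hTl, ?_⟩
  have hqe : q e = 0 := by
    ext
    simp [hq_coe, hφe, hψe]
  ext i
  change T e i = _
  induction i using Fin.cases with
  | zero => rw [hT0, hφe, Pi.single_eq_of_ne (Fin.last_pos.ne)]
  | succ j =>
    induction j using Fin.lastCases with
    | last => rw [Fin.succ_last, hTl, hψe, Pi.single_eq_same]
    | cast l =>
      rw [hTm, hqe, map_zero, Pi.zero_apply, Pi.single_eq_of_ne]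
      rw [← Fin.succ_last, Ne, Fin.succ_inj]
      exact (Fin.castSucc_lt_last l).ne

end

theorem HasNilpotentFactorization.exists_matrix {F : Type*} [Field F] {m : ℕ}
    {N : Matrix (Fin (m + 2)) (Fin (m + 2)) F} (h : HasNilpotentFactorization N.toLin') :
    ∃ N₁ N₂ S : Matrix (Fin (m + 2)) (Fin (m + 2)) F,
      IsNilpotent N₁ ∧ IsNilpotent N₂ ∧ IsUnit S ∧ S⁻¹ * N * S = N₁ * N₂ ∧
      (∀ j, N₁ 0 j = 0) ∧ (∀ i, N₁ i (Fin.last _) = 0) ∧ ∀ j, N₂ (Fin.last _) j = 0 := by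
  obtain ⟨A, B, e, ψ, hA, hB, hN, hAe, hψB, hψe⟩ := h
  obtain ⟨φ, hφ, hφA, hφe⟩ := hA.exists_dual_comp_eq_zero hAe (by simp)
  obtain ⟨T, hT0, hTl, hTe⟩ := exists_linearEquiv_first_last (m := m) (by simp) hφ hφe hψe
  have hTS : LinearMap.toMatrix' T.toLinearMap * LinearMap.toMatrix' T.symm.toLinearMap = 1 := by
    rw [← LinearMap.toMatrix'_comp]
    simp
  have hconj (C : End F (Fin (m + 2) → F)) : LinearMap.toMatrix' (T.conj C) =
      LinearMap.toMatrix' T.toLinearMap * LinearMap.toMatrix' C *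
        LinearMap.toMatrix' T.symm.toLinearMap := by
    rw [LinearEquiv.conj_apply, LinearMap.toMatrix'_comp, LinearMap.toMatrix'_comp]
  refine ⟨LinearMap.toMatrix' (T.conj A), LinearMap.toMatrix' (T.conj B),
    LinearMap.toMatrix' T.symm.toLinearMap, ?_, ?_, ?_, ?_, fun j => ?_, fun i => ?_, fun j => ?_⟩
  · exact (hA.map T.conjRingEquiv).map LinearMap.toMatrixAlgEquiv'
  · exact (hB.map T.conjRingEquiv).map LinearMap.toMatrixAlgEquiv'
  · exact IsUnit.of_mul_eq_one_right _ hTS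
  · rw [Matrix.inv_eq_left_inv hTS, ← LinearMap.toMatrix'_mul]
    have : T.conj A * T.conj B = T.conj N.toLin' := by
      rw [hN]
      exact (map_mul T.conjRingEquiv A B).symm
    rw [this, hconj, LinearMap.toMatrix'_toLin']
  · rw [LinearMap.toMatrix'_apply, LinearEquiv.conj_apply_apply, hT0]
    exact LinearMap.congr_fun hφA _
  · rw [LinearMap.toMatrix'_apply, LinearEquiv.conj_apply_apply, ← hTe, T.symm_apply_apply, hAe]
    simp
  · rw [LinearMap.toMatrix'_apply, LinearEquiv.conj_apply_apply, hTl]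
    exact LinearMap.congr_fun hψB _


/-- **Lemma.** For `n ≠ 2`, every nilpotent `n × n` matrix `N` over a field is similar
to a product `N₁ * N₂` of two nilpotent matrices, where the first row and the last
column of `N₁` are zero, and the last row of `N₂` is either zero or equals `e₁ᵀ`. -/
theorem nilpotent_similar_to_structured_product
    (F : Type*) [Field F] (n : ℕ) (hn : 0 < n) (hn2 : n ≠ 2)
    (N : Matrix (Fin n) (Fin n) F) (hN : IsNilpotent N) :
    ∃ (N₁ N₂ S : Matrix (Fin n) (Fin n) F),
      IsNilpotent N₁ ∧ IsNilpotent N₂ ∧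
      IsUnit S ∧ S⁻¹ * N * S = N₁ * N₂ ∧
      (∀ j, N₁ ⟨0, hn⟩ j = 0) ∧
      (∀ i, N₁ i ⟨n - 1, by omega⟩ = 0) ∧
      ((∀ j, N₂ ⟨n - 1, by omega⟩ j = 0) ∨
        (∀ j : Fin n, N₂ ⟨n - 1, by omega⟩ j = if (j : ℕ) = 0 then 1 else 0)) := by
  by_cases h1 : n = 1
  · subst h1
    have hN0 : N = 0 := by
      obtain ⟨m, hm⟩ := hN
      have hdiag : N = Matrix.diagonal fun i => N i i := by
        ext i j
        simp [Subsingleton.elim i j]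
      rw [hdiag, Matrix.diagonal_pow] at hm
      ext i j
      have := congr_fun (congr_fun hm i) i
      rw [Subsingleton.elim j i]
      simp only [Matrix.diagonal_apply_eq, Pi.pow_apply, Matrix.zero_apply] at this
      exact eq_zero_of_pow_eq_zero this
    exact ⟨0, 0, 1, IsNilpotent.zero, IsNilpotent.zero, isUnit_one, by simp [hN0], by simp,
      by simp, .inl (by simp)⟩
  · obtain ⟨m, rfl⟩ : ∃ m, n = m + 2 := ⟨n - 2, by omega⟩
    have hN' : IsNilpotent N.toLin' := Matrix.isNilpotent_toLin'_iff N |>.2 hN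
    rcases hN'.hasNilpotentFactorization_or (m + 2) (by simp) with h | ⟨h2, -⟩
    · obtain ⟨N₁, N₂, S, hN₁, hN₂, hS, hmul, hrow, hcol, hlast⟩ := h.exists_matrix
      exact ⟨N₁, N₂, S, hN₁, hN₂, hS, hmul, hrow, hcol, .inl hlast⟩
    · exact absurd h2 hn2
end

section
/- Let F be a field and n a positive integer with n ≠ 2. Every nilpotent n×n matrix N over F is a product of two nilpotent n×n matrices over F, each of rank equal to rank(N). -/
open Module

namespace NilpotentFactorization

section

variable {F V W : Type*} [Field F] [AddCommGroup V] [Module F V] [AddCommGroup W] [Module F W]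

/-- `N` is a product of two nilpotent endomorphisms, the left one with range inside that of `N` and
the right one with kernel containing that of `N`. -/
def HasTightFactorization (N : End F V) : Prop :=
  ∃ A B : End F V, IsNilpotent A ∧ IsNilpotent B ∧ N = A * B ∧
    LinearMap.range A ≤ LinearMap.range N ∧ LinearMap.ker N ≤ LinearMap.ker B

lemma isNilpotent_comp_comp {A : End F W} (hA : IsNilpotent A) {s : W →ₗ[F] V} {p : V →ₗ[F] W}
    (hps : ∀ w, p (s w) = w) : IsNilpotent (s ∘ₗ A ∘ₗ p : End F V) := by
  obtain ⟨m, hm⟩ := hA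
  have key : ∀ j, (s ∘ₗ A ∘ₗ p : End F V) ^ (j + 1) = s ∘ₗ (A ^ (j + 1)) ∘ₗ p := by
    intro j
    induction j with
    | zero => simp
    | succ j ih =>
      rw [pow_succ, ih]
      ext v
      simp [hps, pow_succ]
  refine ⟨m + 1, ?_⟩
  rw [key, pow_succ, hm]
  ext v
  simp

lemma HasTightFactorization.of_comp {N : End F V} {N' : End F W} (h : HasTightFactorization N')
    {s i : W →ₗ[F] V} {p q : V →ₗ[F] W} (hps : ∀ w, p (s w) = w) (hqi : ∀ w, q (i w) = w)
    (hpi : ∀ w, p (i w) = w) (hN : ∀ v, N v = s (N' (q v))) : HasTightFactorization N := by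
  obtain ⟨A, B, hA, hB, rfl, hr, hk⟩ := h
  refine ⟨s ∘ₗ A ∘ₗ p, i ∘ₗ B ∘ₗ q, isNilpotent_comp_comp hA hps, isNilpotent_comp_comp hB hqi,
    ?_, ?_, ?_⟩
  · ext v
    simp [hN, hpi]
  · rintro _ ⟨v, rfl⟩
    obtain ⟨w, hw⟩ := hr ⟨p v, rfl⟩
    exact ⟨i w, by simp [hN, hqi, ← hw]⟩
  · intro v hv
    have h1 : (A * B) (q v) = 0 := by
      have := congrArg p ((hN v).symm.trans hv)
      simpa [hps] using this
    have h2 : B (q v) = 0 := hk h1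
    simp [h2]

lemma exists_dual_eq_one_of_notMem {p : Submodule F V} {x : V} (hx : x ∉ p) :
    ∃ f : V →ₗ[F] F, (∀ v ∈ p, f v = 0) ∧ f x = 1 := by
  obtain ⟨f, hf, hp⟩ := Submodule.exists_le_ker_of_notMem hx
  exact ⟨(f x)⁻¹ • f, fun v hv => by simp [LinearMap.mem_ker.1 (hp hv)], by simp [hf]⟩

lemma exists_dual_eq_one_pair {p : Submodule F V} {x y : V} (hx : x ∉ p)
    (hy : y ∉ p ⊔ Submodule.span F {x}) :
    ∃ f : V →ₗ[F] F, (∀ v ∈ p, f v = 0) ∧ f x = 1 ∧ f y = 1 := by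
  obtain ⟨f, hf, hfx⟩ := exists_dual_eq_one_of_notMem hx
  obtain ⟨g, hg, hgy⟩ := exists_dual_eq_one_of_notMem hy
  have hgx : g x = 0 := hg x (Submodule.mem_sup_right (Submodule.mem_span_singleton_self x))
  refine ⟨f + (1 - f y) • g, fun v hv => ?_, ?_, ?_⟩
  · simp [hf v hv, hg v (Submodule.mem_sup_left hv)]
  · simp [hfx, hgx]
  · simp [hgy]

lemma exists_projection_ker {f : V →ₗ[F] F} {x : V} (hfx : f x = 1) :
    ∃ P : V →ₗ[F] LinearMap.ker f, ∀ v, (P v : V) = v - f v • x :=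
  ⟨(LinearMap.id - f.smulRight x).codRestrict _ fun v => by simp [hfx], fun v => by simp⟩

lemma exists_comp_eq_of_ker_le {B : End F W} {g : W →ₗ[F] F}
    (h : ∀ w, B w = 0 → g w = 0) : ∃ a : W →ₗ[F] F, ∀ w, a (B w) = g w := by
  have hg : g ∈ (LinearMap.ker B).dualAnnihilator :=
    (Submodule.mem_dualAnnihilator g).2 fun w hw => h w hw
  rw [← LinearMap.range_dualMap_eq_dualAnnihilator_ker] at hg
  obtain ⟨a, rfl⟩ := hg
  exact ⟨a, fun w => rfl⟩

lemma exists_ne_zero_apply_eq_zero [Nontrivial W] {A : End F W} (hA : IsNilpotent A) :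
    ∃ m, m ≠ 0 ∧ A m = 0 := by
  by_contra! h
  have hinj : Function.Injective A :=
    (injective_iff_map_eq_zero A).2 fun m hm => by_contra fun h0 => h m h0 hm
  obtain ⟨j, hj⟩ := hA
  obtain ⟨w, hw⟩ := exists_ne (0 : W)
  refine hw ((hinj.iterate j) ?_)
  rw [← Module.End.pow_apply, hj, ← Module.End.pow_apply, hj]
  simp

/-- A factorization of the compression of `N` to the hyperplane `ker f` along `N w` extends to one
of `N`. -/
lemma HasTightFactorization.of_compression {N : End F V} {f : V →ₗ[F] F} {w : V}
    [Nontrivial (LinearMap.ker f)] (hfw : f w = 1) (hfx : f (N w) = 1)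
    (hker : ∀ v, N v = 0 → f v = 0) {N' : End F (LinearMap.ker f)}
    (hN' : ∀ u, (N' u : V) = N u - f (N u) • N w) (h : HasTightFactorization N') :
    HasTightFactorization N := by
  obtain ⟨P, hP⟩ := exists_projection_ker hfx
  have hPu : ∀ u : LinearMap.ker f, P u = u := fun u => Subtype.ext <| by
    simp [hP, LinearMap.mem_ker.1 u.2]
  have hPx : P (N w) = 0 := Subtype.ext <| by simp [hP, hfx]
  obtain ⟨A, B, hA, hB, hAB, hr, hk⟩ := h
  have hABu : ∀ u, A (B u) = N' u := fun u => by rw [hAB]; rfl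
  have hBN : ∀ u, B u = 0 → f (N u) = 0 := by
    intro u hu
    have h1 : N u - f (N u) • N w = 0 := by rw [← hN', ← hABu, hu]; simp
    have h2 := hker (u - f (N u) • w) (by simpa using h1)
    simpa [LinearMap.mem_ker.1 u.2, hfw] using h2
  obtain ⟨a₀, ha₀⟩ := exists_comp_eq_of_ker_le (B := B)
    (g := f ∘ₗ N ∘ₗ (LinearMap.ker f).subtype) hBN
  obtain ⟨m, hm0, hm⟩ := exists_ne_zero_apply_eq_zero hA
  have hmB : m ∉ LinearMap.range B := by
    rintro ⟨u, rfl⟩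
    refine hm0 (hk ?_)
    rw [LinearMap.mem_ker, ← hABu, hm]
  obtain ⟨a₁, ha₁, ha₁m⟩ := exists_dual_eq_one_of_notMem hmB
  obtain ⟨a, ha, ham⟩ : ∃ a : LinearMap.ker f →ₗ[F] F,
      (∀ u, a (B u) = f (N u)) ∧ a m = 1 :=
    ⟨a₀ + (1 - a₀ m) • a₁, fun u => by simp [ha₁ (B u) ⟨u, rfl⟩, ha₀], by simp [ha₁m]⟩
  set d : LinearMap.ker f := ⟨w - N w, by simp [hfw, hfx]⟩ with hd
  set b : LinearMap.ker f := m - B d with hb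
  have hab : a b = f (N (N w)) := by simp [hb, ha, ham, hd, hfx]
  have hAb : A b = P (N (N w)) := by
    refine Subtype.ext ?_
    simp only [hb, map_sub, hm, hABu, zero_sub, Submodule.coe_neg, hN', hP, hd, hfx]
    module
  set A₁ : End F V := (LinearMap.ker f).subtype ∘ₗ A ∘ₗ P + (a ∘ₗ P).smulRight (N w) with hA₁
  set B₁ : End F V := (LinearMap.ker f).subtype ∘ₗ (B ∘ₗ P + f.smulRight b) with hB₁
  have hPA : ∀ j v, P ((A₁ ^ j) v) = (A ^ j) (P v) := by
    intro j
    induction j with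
    | zero => simp
    | succ j ih =>
      intro v
      rw [pow_succ, pow_succ, Module.End.mul_apply, Module.End.mul_apply, ih]
      simp [hA₁, hPu, hPx]
  have hBB : ∀ j (u : LinearMap.ker f), (B₁ ^ j) u = (B ^ j) u := by
    intro j
    induction j with
    | zero => simp
    | succ j ih =>
      intro u
      have : B₁ u = B u := by simp [hB₁, hPu, LinearMap.mem_ker.1 u.2]
      rw [pow_succ, pow_succ, Module.End.mul_apply, Module.End.mul_apply, this, ih]
  refine ⟨A₁, B₁, ?_, ?_, ?_, ?_, ?_⟩
  · obtain ⟨j, hj⟩ := hA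
    refine ⟨j + 1, LinearMap.ext fun v => ?_⟩
    rw [pow_succ', Module.End.mul_apply]
    have h0 : P ((A₁ ^ j) v) = 0 := by rw [hPA, hj, LinearMap.zero_apply]
    have h1 : ∀ y, A₁ y = A (P y) + a (P y) • N w := fun y => by simp [hA₁]
    rw [h1, h0]
    simp
  · obtain ⟨j, hj⟩ := hB
    refine ⟨j + 1, LinearMap.ext fun v => ?_⟩
    rw [pow_succ, Module.End.mul_apply]
    have := hBB j (B (P v) + f v • b)
    rw [hj] at this
    simpa [hB₁] using this
  · ext v
    have hv : v = (P v : V) + f v • N w := by simp [hP]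
    have h1 : (A₁ * B₁) v = (N' (P v) : V) + f v • (A b : V) + (f (N (P v)) + f v * a b) • N w := by
      simp [hA₁, hB₁, hPu, hABu, ha]
    rw [h1, hN', hAb, hab, hP (N (N w))]
    conv_lhs => rw [hv]
    simp only [map_add, map_smul]
    module
  · rintro _ ⟨v, rfl⟩
    obtain ⟨u, hu⟩ := hr ⟨P v, rfl⟩
    refine ⟨(u - f (N u) • w) + a (P v) • w, ?_⟩
    simp [hA₁, ← hu, hN']
  · intro v hv
    have hfv := hker v hv
    have hPv : (P v : V) = v := by simp [hP, hfv]
    have : B (P v) = 0 := hk <| Subtype.ext <| by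
      rw [hN', hPv, LinearMap.mem_ker.1 hv]; simp
    simp [hB₁, this, hfv]

end

section

variable {F V : Type*} [Field F] [AddCommGroup V] [Module F V]

lemma isNilpotent_of_sq_eq_mul {R : Type*} [Ring R] {M N : R} (hN : IsNilpotent N)
    (h : M * M = N * M) : IsNilpotent M := by
  obtain ⟨m, hm⟩ := hN
  have key : ∀ j, M ^ (j + 1) = N ^ j * M := by
    intro j
    induction j with
    | zero => simp
    | succ j ih => rw [pow_succ, ih, mul_assoc, h, ← mul_assoc, pow_succ]
  exact ⟨m + 1, by rw [key, hm, zero_mul]⟩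

lemma range_pow_not_le_range_pow_succ {N : End F V} (hN : IsNilpotent N) {i : ℕ}
    (hi : N ^ i ≠ 0) : ∃ w, (N ^ i) w ∉ LinearMap.range (N ^ (i + 1)) := by
  by_contra! h
  have key : ∀ j w, (N ^ i) w ∈ LinearMap.range (N ^ (i + j)) := by
    intro j
    induction j with
    | zero => exact fun w => ⟨w, rfl⟩
    | succ j ih =>
      intro w
      obtain ⟨u, hu⟩ := ih w
      obtain ⟨v, hv⟩ := h u
      refine ⟨v, ?_⟩
      rw [← hu, add_comm i j, pow_add N j i, Module.End.mul_apply, ← hv, ← Module.End.mul_apply,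
        ← pow_add, add_left_comm]
  obtain ⟨m, hm⟩ := hN
  refine hi (LinearMap.ext fun w => ?_)
  obtain ⟨u, hu⟩ := key m w
  rw [← hu, pow_add, hm]
  simp

/-- An endomorphism with nonzero square compresses to a nilpotent endomorphism of a hyperplane whose
tight factorizations extend. -/
lemma exists_compression_of_sq_ne_zero {N : End F V} (hN : IsNilpotent N) (h2 : N ^ 2 ≠ 0) :
    ∃ f : V →ₗ[F] F, f ≠ 0 ∧ ∃ N' : End F (LinearMap.ker f), IsNilpotent N' ∧
      (Nontrivial (LinearMap.ker f) → HasTightFactorization N' → HasTightFactorization N) := by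
  obtain ⟨w, hw⟩ := range_pow_not_le_range_pow_succ hN h2
  have hNw : N w ∉ LinearMap.range (N ^ 2) ⊔ LinearMap.ker N := by
    intro h
    obtain ⟨_, ⟨y, rfl⟩, z, hz, hyz⟩ := Submodule.mem_sup.1 h
    refine hw ⟨y, ?_⟩
    have := congrArg N hyz
    simpa [pow_succ, LinearMap.mem_ker.1 hz] using this
  have hww : w ∉ LinearMap.range (N ^ 2) ⊔ LinearMap.ker N ⊔ Submodule.span F {N w} := by
    intro h
    obtain ⟨_, hp, _, hc, hpc⟩ := Submodule.mem_sup.1 h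
    obtain ⟨_, ⟨y, rfl⟩, z, hz, rfl⟩ := Submodule.mem_sup.1 hp
    obtain ⟨c, rfl⟩ := Submodule.mem_span_singleton.1 hc
    refine hNw (Submodule.mem_sup_left ⟨N y + c • w, ?_⟩)
    have := congrArg N hpc
    simpa [pow_succ, LinearMap.mem_ker.1 hz] using this
  obtain ⟨f, hf, hfx, hfw⟩ := exists_dual_eq_one_pair hNw hww
  have hfsq : ∀ v, f (N (N v)) = 0 := fun v =>
    hf _ (Submodule.mem_sup_left ⟨v, by simp [pow_succ]⟩)
  obtain ⟨P, hP⟩ := exists_projection_ker hfx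
  set N' : End F (LinearMap.ker f) := P ∘ₗ N ∘ₗ (LinearMap.ker f).subtype with hN'
  have hN'u : ∀ u, (N' u : V) = N u - f (N u) • N w := fun u => by simp [hN', hP]
  refine ⟨f, fun h0 => by simp [h0] at hfx, N', ?_, fun _ h =>
    h.of_compression hfw hfx (fun v hv => hf v (Submodule.mem_sup_right hv)) hN'u⟩
  have hM : IsNilpotent (N - (f ∘ₗ N).smulRight (N w) : End F V) := by
    refine isNilpotent_of_sq_eq_mul hN (LinearMap.ext fun v => ?_)
    simp [hfsq]
  obtain ⟨m, hm⟩ := hM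
  have key : ∀ j u, ((N' ^ j) u : V) = ((N - (f ∘ₗ N).smulRight (N w) : End F V) ^ j) u := by
    intro j
    induction j with
    | zero => simp
    | succ j ih =>
      intro u
      rw [pow_succ, pow_succ, Module.End.mul_apply, Module.End.mul_apply, ih, hN'u]
      simp
  exact ⟨m, LinearMap.ext fun u => Subtype.ext <| by rw [key, hm]; simp⟩

lemma exists_ker_notMem_span [FiniteDimensional F V] {N : End F V} (h2 : ∀ v, N (N v) = 0)
    (hV : 3 ≤ finrank F V) (x : V) : ∃ k, N k = 0 ∧ k ∉ Submodule.span F {x} := by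
  by_contra! h
  have h1 : finrank F (LinearMap.ker N) ≤ 1 :=
    (Submodule.finrank_mono (t := Submodule.span F {x}) fun k hk => h k hk).trans
      (by simpa using finrank_span_le_card (R := F) ({x} : Set V))
  have h3 : finrank F (LinearMap.range N) ≤ finrank F (LinearMap.ker N) :=
    Submodule.finrank_mono <| by rintro _ ⟨v, rfl⟩; exact h2 v
  have := N.finrank_range_add_finrank_ker
  omega

/-- A nonzero endomorphism with zero square factors through a nilpotent endomorphism of a hyperplane
whose tight factorizations extend. -/
lemma exists_reduction_of_sq_eq_zero [FiniteDimensional F V] {N : End F V}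
    (h2 : ∀ v, N (N v) = 0) (h0 : N ≠ 0) (hV : 3 ≤ finrank F V) :
    ∃ g : V →ₗ[F] F, g ≠ 0 ∧ ∃ N' : End F (LinearMap.ker g), IsNilpotent N' ∧
      (HasTightFactorization N' → HasTightFactorization N) := by
  obtain ⟨x, hx⟩ : ∃ x, N x ≠ 0 := by
    by_contra! h
    exact h0 (LinearMap.ext h)
  obtain ⟨k, hk, hkx⟩ := exists_ker_notMem_span h2 hV (N x)
  have hxR : x ∉ LinearMap.range N := by
    rintro ⟨y, rfl⟩
    exact hx (h2 y)
  obtain ⟨g, hg, hgx⟩ := exists_dual_eq_one_of_notMem hxR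
  have hxk : x ∉ Submodule.span F {N x} ⊔ Submodule.span F {k} := by
    intro h
    obtain ⟨_, hp, _, hc, hpc⟩ := Submodule.mem_sup.1 h
    obtain ⟨c, rfl⟩ := Submodule.mem_span_singleton.1 hp
    obtain ⟨d, rfl⟩ := Submodule.mem_span_singleton.1 hc
    refine hx ?_
    rw [← hpc]
    simp [h2, hk]
  obtain ⟨f, hf, hfk, hfx⟩ := exists_dual_eq_one_pair hkx hxk
  have hfNx : f (N x) = 0 := hf _ (Submodule.mem_span_singleton_self _)
  obtain ⟨P, hP⟩ := exists_projection_ker hgx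
  have hgN : ∀ v, g (N v) = 0 := fun v => hg _ ⟨v, rfl⟩
  set i : LinearMap.ker g →ₗ[F] V := (LinearMap.id - f.smulRight x) ∘ₗ (LinearMap.ker g).subtype
    with hi
  set q : V →ₗ[F] LinearMap.ker g := P ∘ₗ (LinearMap.id - f.smulRight k) with hq
  set N' : End F (LinearMap.ker g) := (N ∘ₗ i).codRestrict _ fun u => hgN _ with hN'
  have hN'u : ∀ u, (N' u : V) = N u - f u • N x := fun u => by simp [hN', hi]
  have hPx : P x = 0 := Subtype.ext <| by simp [hP, hgx]
  have hPu : ∀ u : LinearMap.ker g, P u = u := fun u => Subtype.ext <| by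
    simp [hP, LinearMap.mem_ker.1 u.2]
  refine ⟨g, fun h => by simp [h] at hgx, N', ⟨3, ?_⟩, fun h =>
    h.of_comp (s := (LinearMap.ker g).subtype) (i := i) (p := P) (q := q) hPu ?_ ?_ ?_⟩
  · refine LinearMap.ext fun u => Subtype.ext ?_
    simp [pow_succ, hN'u, h2, hfNx]
  · intro u
    simp [hq, hi, hfx, hPx, hPu]
  · intro u
    simp [hi, hPx, hPu]
  · intro v
    simp [hN'u, hq, hP, hfk, hfx, hk]
    module

end

section

variable {F V : Type*} [Field F] [AddCommGroup V] [Module F V]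

lemma hasTightFactorization_zero : HasTightFactorization (0 : End F V) :=
  ⟨0, 0, IsNilpotent.zero, IsNilpotent.zero, by simp, by simp, by simp⟩

/-- The single Jordan block of size three. -/
lemma hasTightFactorization_of_basis_chain {N : End F V} (b : Basis (Fin 3) F V)
    (h₀ : N (b 0) = b 1) (h₁ : N (b 1) = b 2) (h₂ : N (b 2) = 0) : HasTightFactorization N := by
  refine ⟨b.constr F ![b 2, 0, b 1], b.constr F ![b 2, b 0, 0], ⟨3, ?_⟩, ⟨3, ?_⟩, ?_, ?_, ?_⟩
  · refine b.ext fun i => ?_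
    fin_cases i <;> simp [pow_succ, b.constr_basis]
  · refine b.ext fun i => ?_
    fin_cases i <;> simp [pow_succ, b.constr_basis]
  · refine b.ext fun i => ?_
    fin_cases i <;> simp [b.constr_basis, h₀, h₁, h₂]
  · rw [b.constr_range, Submodule.span_le]
    rintro _ ⟨i, rfl⟩
    fin_cases i
    · exact ⟨b 1, h₁⟩
    · exact ⟨0, map_zero N⟩
    · exact ⟨b 0, h₀⟩
  · intro v hv
    have h := LinearMap.mem_ker.1 hv
    rw [← b.sum_repr v] at h ⊢
    simp only [Fin.sum_univ_three, map_add, map_smul, h₀, h₁, h₂] at h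
    have e1 := congrArg (fun v => b.repr v 1) h
    have e2 := congrArg (fun v => b.repr v 2) h
    simp at e1 e2
    simp [Fin.sum_univ_three, e1, e2]

/-- The direct sum of a Jordan block of size two and a zero block of size one. -/
lemma hasTightFactorization_of_basis_pair {N : End F V} (b : Basis (Fin 3) F V)
    (h₀ : N (b 0) = b 1) (h₁ : N (b 1) = 0) (h₂ : N (b 2) = 0) : HasTightFactorization N := by
  refine ⟨b.constr F ![0, 0, b 1], b.constr F ![b 2, 0, 0], ⟨2, ?_⟩, ⟨2, ?_⟩, ?_, ?_, ?_⟩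
  · refine b.ext fun i => ?_
    fin_cases i <;> simp [pow_succ, b.constr_basis]
  · refine b.ext fun i => ?_
    fin_cases i <;> simp [pow_succ, b.constr_basis]
  · refine b.ext fun i => ?_
    fin_cases i <;> simp [b.constr_basis, h₀, h₁, h₂]
  · rw [b.constr_range, Submodule.span_le]
    rintro _ ⟨i, rfl⟩
    fin_cases i
    · exact ⟨0, map_zero N⟩
    · exact ⟨0, map_zero N⟩
    · exact ⟨b 0, h₀⟩
  · intro v hv
    have h := LinearMap.mem_ker.1 hv
    rw [← b.sum_repr v] at h ⊢
    simp only [Fin.sum_univ_three, map_add, map_smul, h₀, h₁, h₂] at h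
    have e1 := congrArg (fun v => b.repr v 1) h
    simp at e1
    simp [Fin.sum_univ_three, e1]

lemma pow_finrank_eq_zero_of_isNilpotent [FiniteDimensional F V] {N : End F V}
    (hN : IsNilpotent N) : N ^ finrank F V = 0 := by
  simpa [hN.charpoly_eq_X_pow_finrank] using LinearMap.aeval_self_charpoly N

lemma hasTightFactorization_of_finrank_eq_three [FiniteDimensional F V] {N : End F V}
    (hN : IsNilpotent N) (hV : finrank F V = 3) : HasTightFactorization N := by
  have hN3 : ∀ v, N (N (N v)) = 0 := fun v => by
    have := pow_finrank_eq_zero_of_isNilpotent hN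
    rw [hV] at this
    simpa [pow_succ] using LinearMap.congr_fun this v
  have basis_of : ∀ x y z : V, (∀ c d e : F, c • x + d • y + e • z = 0 → c = 0 ∧ d = 0 ∧ e = 0) →
      ∃ b : Basis (Fin 3) F V, b 0 = x ∧ b 1 = y ∧ b 2 = z := by
    intro x y z h
    have hli : LinearIndependent F ![x, y, z] := by
      rw [Fintype.linearIndependent_iff]
      intro c hc
      obtain ⟨h0, h1, h2⟩ := h (c 0) (c 1) (c 2) (by simpa [Fin.sum_univ_three] using hc)
      intro i
      fin_cases i <;> assumption
    exact ⟨basisOfLinearIndependentOfCardEqFinrank hli (by simp [hV]), by simp, by simp, by simp⟩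
  by_cases h2 : ∀ v, N (N v) = 0
  · by_cases h0 : N = 0
    · rw [h0]
      exact hasTightFactorization_zero
    obtain ⟨x, hx⟩ : ∃ x, N x ≠ 0 := by
      by_contra! h
      exact h0 (LinearMap.ext h)
    obtain ⟨k, hk, hkx⟩ := exists_ker_notMem_span h2 hV.ge (N x)
    obtain ⟨b, rfl, hb1, rfl⟩ := basis_of x (N x) k fun c d e h => by
      have hc : c = 0 := by simpa [h2, hk, hx] using congrArg N h
      have he : e = 0 := by
        by_contra he
        refine hkx (Submodule.mem_span_singleton.2 ⟨-(e⁻¹ * d), ?_⟩)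
        have h' : d • N x + e • k = 0 := by simpa [hc] using h
        rw [neg_smul, mul_smul, eq_neg_of_add_eq_zero_left h']
        simp [he]
      exact ⟨hc, by simpa [hc, he, hx] using h, he⟩
    exact hasTightFactorization_of_basis_pair b hb1.symm (by rw [hb1, h2]) hk
  · push Not at h2
    obtain ⟨w, hw⟩ := h2
    obtain ⟨b, rfl, hb1, hb2⟩ := basis_of w (N w) (N (N w)) fun c d e h => by
      have hc : c = 0 := by simpa [hN3, hw] using congrArg (fun v => N (N v)) h
      have hd : d = 0 := by simpa [hN3, hw, hc] using congrArg N h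
      exact ⟨hc, hd, by simpa [hc, hd, hw] using h⟩
    exact hasTightFactorization_of_basis_chain b hb1.symm (by rw [hb1, hb2]) (by rw [hb2, hN3])

end

lemma finrank_ker_dual {F V : Type*} [Field F] [AddCommGroup V] [Module F V]
    [FiniteDimensional F V] {f : V →ₗ[F] F} (hf : f ≠ 0) {n : ℕ} (hV : finrank F V = n + 1) :
    finrank F (LinearMap.ker f) = n := by
  have := Module.Dual.finrank_ker_add_one_of_ne_zero hf
  omega

theorem hasTightFactorization_of_three_le {F : Type*} [Field F] (n : ℕ) (hn : 3 ≤ n) :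
    ∀ {V : Type*} [AddCommGroup V] [Module F V] [FiniteDimensional F V] (N : End F V),
      IsNilpotent N → finrank F V = n → HasTightFactorization N := by
  induction n, hn using Nat.le_induction with
  | base => exact fun N hN hV => hasTightFactorization_of_finrank_eq_three hN hV
  | succ n hn ih =>
    intro V _ _ _ N hN hV
    by_cases h2 : N ^ 2 = 0
    · by_cases h0 : N = 0
      · rw [h0]
        exact hasTightFactorization_zero
      obtain ⟨g, hg, N', hN', himp⟩ := exists_reduction_of_sq_eq_zero
        (fun v => by simpa [pow_succ] using LinearMap.congr_fun h2 v) h0 (by omega)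
      exact himp (ih N' hN' (finrank_ker_dual hg hV))
    · obtain ⟨f, hf, N', hN', himp⟩ := exists_compression_of_sq_ne_zero hN h2
      have hfin := finrank_ker_dual hf hV
      exact himp (Module.nontrivial_of_finrank_pos (R := F) (by omega)) (ih N' hN' hfin)

theorem hasTightFactorization_of_finrank_ne_two {F V : Type*} [Field F] [AddCommGroup V]
    [Module F V] [FiniteDimensional F V] {N : End F V} (hN : IsNilpotent N)
    (hV : finrank F V ≠ 2) : HasTightFactorization N := by
  by_cases h : 3 ≤ finrank F V
  · exact hasTightFactorization_of_three_le _ h N hN rfl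
  · have hpow := pow_finrank_eq_zero_of_isNilpotent hN
    have hN1 : N ^ 1 = 0 := pow_eq_zero_of_le (by omega) hpow
    rw [pow_one] at hN1
    rw [hN1]
    exact hasTightFactorization_zero

lemma HasTightFactorization.exists_finrank_range_eq {F V : Type*} [Field F] [AddCommGroup V]
    [Module F V] [FiniteDimensional F V] {N : End F V} (h : HasTightFactorization N) :
    ∃ A B : End F V, IsNilpotent A ∧ IsNilpotent B ∧ N = A * B ∧
      finrank F (LinearMap.range A) = finrank F (LinearMap.range N) ∧
      finrank F (LinearMap.range B) = finrank F (LinearMap.range N) := by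
  obtain ⟨A, B, hA, hB, hAB, hr, hk⟩ := h
  refine ⟨A, B, hA, hB, hAB, ?_, ?_⟩
  · rw [le_antisymm hr (hAB ▸ LinearMap.range_comp_le_range B A)]
  · have hker : LinearMap.ker N = LinearMap.ker B :=
      le_antisymm hk (hAB ▸ LinearMap.ker_le_ker_comp B A)
    have h1 := N.finrank_range_add_finrank_ker
    have h2 := B.finrank_range_add_finrank_ker
    rw [hker] at h1
    omega

end NilpotentFactorization

open NilpotentFactorization in
/-- For `n ≠ 2`, every nilpotent `n × n` matrix over a field is a product of two
nilpotent matrices, each of the same rank as `N`. -/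
theorem nilpotent_is_product_of_two_nilpotents_of_same_rank
    (F : Type*) [Field F] (n : ℕ) (hn : 0 < n) (hn2 : n ≠ 2)
    (N : Matrix (Fin n) (Fin n) F) (hN : IsNilpotent N) :
    ∃ N₁ N₂ : Matrix (Fin n) (Fin n) F,
      IsNilpotent N₁ ∧ IsNilpotent N₂ ∧ N = N₁ * N₂ ∧
      N₁.rank = N.rank ∧ N₂.rank = N.rank := by
  have hrank : ∀ A : End F (Fin n → F),
      (Matrix.toLinAlgEquiv'.symm A).rank = finrank F (LinearMap.range A) := fun A => by
    conv_rhs => rw [← AlgEquiv.apply_symm_apply Matrix.toLinAlgEquiv' A]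
    rfl
  have hfac : HasTightFactorization (Matrix.toLinAlgEquiv' N) :=
    hasTightFactorization_of_finrank_ne_two (hN.map Matrix.toLinAlgEquiv') (by simpa using hn2)
  obtain ⟨A, B, hA, hB, hAB, hrA, hrB⟩ := hfac.exists_finrank_range_eq
  have hN' : N.rank = finrank F (LinearMap.range (Matrix.toLinAlgEquiv' N)) := by
    rw [← hrank, AlgEquiv.symm_apply_apply]
  refine ⟨Matrix.toLinAlgEquiv'.symm A, Matrix.toLinAlgEquiv'.symm B,
    hA.map Matrix.toLinAlgEquiv'.symm, hB.map Matrix.toLinAlgEquiv'.symm, ?_, ?_, ?_⟩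
  · rw [← map_mul, ← hAB, AlgEquiv.symm_apply_apply]
  · rw [hrank, hrA, hN']
  · rw [hrank, hrB, hN']
end

section
/- Let F be a field and k an odd integer with k ≥ 3. Then the k×k Jordan block J_k(0) is similar over F to a product N₁N₂ of two nilpotent k×k matrices, where the first row and the last column of N₁ are both zero and the last row of N₂ is zero. -/
/-- A matrix whose nonzero entries strictly increase a bounded rank function is nilpotent. -/
theorem Matrix.isNilpotent_of_rank_lt {R n : Type*} [Semiring R] [Fintype n] [DecidableEq n]
    (A : Matrix n n R) (r : n → ℕ) (b : ℕ) (hb : ∀ i, r i < b)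
    (hA : ∀ i j, A i j ≠ 0 → r j < r i) : IsNilpotent A := by
  have key : ∀ m i j, (A ^ m) i j ≠ 0 → r j + m ≤ r i := by
    intro m
    induction m with
    | zero =>
      intro i j h
      by_cases hij : i = j
      · simp [hij]
      · simp [hij] at h
    | succ m ih =>
      intro i j h
      rw [pow_succ, Matrix.mul_apply] at h
      obtain ⟨l, -, hl⟩ := Finset.exists_ne_zero_of_sum_ne_zero h
      have h₁ := ih i l (left_ne_zero_of_mul hl)
      have h₂ := hA l j (right_ne_zero_of_mul hl)
      omega
  refine ⟨b, ?_⟩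
  ext i j
  by_contra h
  have h₁ := key b i j h
  have h₂ := hb i
  omega

/-- The position of `j` in the sequence `0, 2, 4, …` of even numbers modulo the odd number `k`. -/
def halfMod {k : ℕ} (hodd : Odd k) (j : Fin k) : Fin k :=
  ⟨if (j : ℕ) % 2 = 0 then j / 2 else (j + k) / 2, by
    have := j.2
    obtain ⟨m, rfl⟩ := hodd
    split_ifs <;> omega⟩

theorem halfMod_injective {k : ℕ} (hodd : Odd k) : Function.Injective (halfMod hodd) := by
  rintro ⟨a, ha⟩ ⟨b, hb⟩ h
  obtain ⟨m, rfl⟩ := hodd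
  simp only [halfMod, Fin.mk.injEq] at h ⊢
  split_ifs at h <;> omega

/-- The matrix of the partial cyclic shift `k - 1 ↦ 0 ↦ 1 ↦ ⋯ ↦ k - 2 ↦ 0`, where the last
arrow sends a basis vector to the zero vector. -/
def truncatedCycle (F : Type*) [Field F] (k : ℕ) : Matrix (Fin k) (Fin k) F :=
  Matrix.of fun i j =>
    if ((i : ℕ) = j + 1 ∧ (i : ℕ) + 1 ≠ k) ∨ ((i : ℕ) = 0 ∧ (j : ℕ) + 1 = k) then 1 else 0

theorem isNilpotent_jordanBlock0 (F : Type*) [Field F] (k : ℕ) :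
    IsNilpotent (jordanBlock0 F k) := by
  refine Matrix.isNilpotent_of_rank_lt _ (fun i => (i : ℕ)) k (fun i => i.2) fun i j h => ?_
  simp only [jordanBlock0, Matrix.of_apply, ne_eq, ite_eq_right_iff, one_ne_zero, imp_false,
    not_not] at h
  omega

theorem isNilpotent_truncatedCycle (F : Type*) [Field F] {k : ℕ} (hk : 2 ≤ k) :
    IsNilpotent (truncatedCycle F k) := by
  refine Matrix.isNilpotent_of_rank_lt _ (fun i => if (i : ℕ) + 1 = k then 0 else (i : ℕ) + 1) k
    (fun i => ?_) fun i j h => ?_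
  · have := i.2
    split_ifs <;> omega
  · simp only [truncatedCycle, Matrix.of_apply, ne_eq, ite_eq_right_iff, one_ne_zero, imp_false,
      not_not] at h
    split_ifs <;> omega

theorem jordanBlock0_mul_truncatedCycle (F : Type*) [Field F] {k : ℕ} (hodd : Odd k) :
    jordanBlock0 F k * truncatedCycle F k =
      (jordanBlock0 F k).submatrix (halfMod hodd) (halfMod hodd) := by
  ext ⟨i, hi⟩ ⟨j, hj⟩
  rw [Matrix.mul_apply]
  obtain _ | i := i
  · rw [Finset.sum_eq_zero fun l _ => by simp [jordanBlock0]]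
    simp [jordanBlock0, halfMod]
  · rw [Finset.sum_eq_single ⟨i, by omega⟩]
    · obtain ⟨m, rfl⟩ := hodd
      simp only [jordanBlock0, truncatedCycle, halfMod, Matrix.of_apply, Matrix.submatrix_apply,
        if_true, one_mul]
      congr 1
      rw [eq_iff_iff]
      split_ifs <;> omega
    · rintro ⟨l, hl⟩ - h
      have : i ≠ l := fun e => h (by simp [e])
      simp [jordanBlock0, this]
    · simp

theorem Matrix.inv_mul_mul_one_submatrix {R n : Type*} [CommRing R] [Fintype n] [DecidableEq n]
    (A : Matrix n n R) {r : n → n} (hr : Function.Injective r) :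
    IsUnit ((1 : Matrix n n R).submatrix id r) ∧
      ((1 : Matrix n n R).submatrix id r)⁻¹ * A * (1 : Matrix n n R).submatrix id r =
        A.submatrix r r := by
  have hmul (B : Matrix n n R) :
      (1 : Matrix n n R).submatrix r id * B * (1 : Matrix n n R).submatrix id r =
        B.submatrix r r := by
    ext i j
    simp [Matrix.mul_apply, Matrix.one_apply]
  have hinv : (1 : Matrix n n R).submatrix r id * (1 : Matrix n n R).submatrix id r = 1 := by
    simpa [Matrix.submatrix_one r hr] using hmul 1
  exact ⟨IsUnit.of_mul_eq_one_right _ hinv, by rw [Matrix.inv_eq_left_inv hinv, hmul]⟩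

/-- For odd `k ≥ 3`, the Jordan block `J_k(0)` is similar to a product `N₁ * N₂` of two
nilpotent matrices, where the first row and last column of `N₁` are zero and the last
row of `N₂` is zero. -/
theorem jordan_block_odd_similar_to_structured_product
    (F : Type*) [Field F] (k : ℕ) (hk : 3 ≤ k) (hodd : Odd k) :
    ∃ (N₁ N₂ S : Matrix (Fin k) (Fin k) F),
      IsNilpotent N₁ ∧ IsNilpotent N₂ ∧
      IsUnit S ∧ S⁻¹ * jordanBlock0 F k * S = N₁ * N₂ ∧
      (∀ j, N₁ ⟨0, by omega⟩ j = 0) ∧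
      (∀ i, N₁ i ⟨k - 1, by omega⟩ = 0) ∧
      (∀ j, N₂ ⟨k - 1, by omega⟩ j = 0) := by
  obtain ⟨hS, hSim⟩ :=
    (jordanBlock0 F k).inv_mul_mul_one_submatrix (halfMod_injective hodd)
  refine ⟨jordanBlock0 F k, truncatedCycle F k, _, isNilpotent_jordanBlock0 F k,
    isNilpotent_truncatedCycle F (by omega), hS,
    hSim.trans (jordanBlock0_mul_truncatedCycle F hodd).symm, ?_, ?_, ?_⟩
  · intro j
    simp [jordanBlock0]
  · intro i
    have := i.2
    simp only [jordanBlock0, Matrix.of_apply, ite_eq_right_iff, one_ne_zero, imp_false]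
    omega
  · intro j
    simp only [truncatedCycle, Matrix.of_apply, ite_eq_right_iff, one_ne_zero, imp_false]
    omega
end

section
/- Let F be a field. The 6×6 block diagonal matrix Dg[J_2(0), J_2(0), J_2(0)] over F is similar to a product N₁N₂ of two nilpotent 6×6 matrices, where the first row and the last column of N₁ are both zero and the last row of N₂ is zero. -/
/-- The `6 × 6` block diagonal matrix `Dg[J_2(0), J_2(0), J_2(0)]` is similar to a
product `N₁ * N₂` of two nilpotent matrices, where the first row and last column of
`N₁` are zero and the last row of `N₂` is zero. -/
theorem j2_j2_j2_similar_to_structured_product (F : Type*) [Field F] :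
    ∃ (N₁ N₂ S : Matrix (Fin 6) (Fin 6) F),
      IsNilpotent N₁ ∧ IsNilpotent N₂ ∧
      IsUnit S ∧
      S⁻¹ * (!![0,0,0,0,0,0;
                 1,0,0,0,0,0;
                 0,0,0,0,0,0;
                 0,0,1,0,0,0;
                 0,0,0,0,0,0;
                 0,0,0,0,1,0] : Matrix (Fin 6) (Fin 6) F) * S = N₁ * N₂ ∧
      (∀ j, N₁ 0 j = 0) ∧
      (∀ i, N₁ i 5 = 0) ∧
      (∀ j, N₂ 5 j = 0) := by
  let S : Matrix (Fin 6) (Fin 6) F :=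
    !![1,0,0,0,0,0;
      0,0,0,1,0,0;
      0,1,0,0,0,0;
      0,0,0,0,0,1;
      0,0,1,0,0,0;
      0,0,0,0,1,0]
  have hS : S.transpose * S = 1 := by
    ext i j
    fin_cases i <;> fin_cases j <;> simp [S, Matrix.mul_apply, Fin.sum_univ_succ]
  refine ⟨!![0,0,0,0,0,0;
      0,0,0,0,0,0;
      0,0,0,0,0,0;
      0,1,0,0,0,0;
      0,0,0,1,0,0;
      0,0,1,0,0,0],
    !![0,0,0,0,0,0;
      1,0,0,0,0,0;
      0,1,0,0,0,0;
      0,0,1,0,0,0;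
      0,0,0,0,0,0;
      0,0,0,0,0,0],
    S, ⟨3, ?_⟩, ⟨4, ?_⟩, IsUnit.of_mul_eq_one_right _ hS, ?_, ?_, ?_, ?_⟩
  · simp [pow_succ, ← Matrix.ext_iff, Fin.forall_fin_succ]
  · simp [pow_succ, ← Matrix.ext_iff, Fin.forall_fin_succ]
  · rw [Matrix.inv_eq_left_inv hS]
    ext i j
    fin_cases i <;> fin_cases j <;> simp [S, Matrix.mul_apply, Fin.sum_univ_succ]
  all_goals simp [Fin.forall_fin_succ]
end

section
/- Let F be a field, n ≥ 2, and let A₁ be an invertible (n−1)×(n−1) matrix over F. Then the n×n block diagonal matrix Dg[0₁, A₁] (with a single zero 1×1 block followed by A₁) is a product of two nilpotent n×n matrices over F, each of rank n−1. -/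
open Matrix

section

variable {F : Type*} [Field F]

/-- A square matrix with vanishing entries on and below the diagonal is nilpotent. -/
theorem Matrix.isNilpotent_of_strictly_upper {n : ℕ} (N : Matrix (Fin n) (Fin n) F)
    (hN : ∀ i j, j ≤ i → N i j = 0) : IsNilpotent N := by
  have hchar : N.charpoly = Polynomial.X ^ n := by
    rw [Matrix.charpoly_of_isUpperTriangular N fun i j hij => hN i j (le_of_lt hij)]
    simp [hN _ _ le_rfl]
  refine ⟨n, ?_⟩
  simpa [hchar] using N.aeval_self_charpoly

/-- A square matrix with vanishing entries on and above the diagonal is nilpotent. -/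
theorem Matrix.isNilpotent_of_strictly_lower {n : ℕ} (N : Matrix (Fin n) (Fin n) F)
    (hN : ∀ i j, i ≤ j → N i j = 0) : IsNilpotent N := by
  rw [← Matrix.isNilpotent_transpose_iff]
  exact Matrix.isNilpotent_of_strictly_upper _ fun i j hij => hN j i hij

/-- Nilpotency is invariant under conjugation. -/
theorem IsNilpotent.conj_of_mul_eq_one {R : Type*} [Ring R] {N P Q : R} (hN : IsNilpotent N)
    (hPQ : P * Q = 1) : IsNilpotent (Q * N * P) := by
  obtain ⟨m, hm⟩ := hN
  refine ⟨m + 1, ?_⟩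
  have hpow : ∀ r : ℕ, (Q * N * P) ^ (r + 1) = Q * N ^ (r + 1) * P := by
    intro r
    induction r with
    | zero => simp
    | succ r ih =>
      rw [_root_.pow_succ, ih, _root_.pow_succ N (r + 1)]
      simp only [mul_assoc]
      rw [← mul_assoc P Q, hPQ, one_mul]
  rw [hpow, _root_.pow_succ, hm]
  simp

/-- A nilpotent matrix of positive size does not have full rank. -/
theorem Matrix.rank_lt_of_isNilpotent {n : ℕ} [NeZero n] {N : Matrix (Fin n) (Fin n) F}
    (hN : IsNilpotent N) : N.rank < n := by
  refine lt_of_le_of_ne (N.rank_le_width) fun h => ?_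
  have hunit : IsUnit N := by
    rw [← Matrix.mulVec_surjective_iff_isUnit, ← Matrix.coe_mulVecLin, ← LinearMap.range_eq_top]
    apply Submodule.eq_top_of_finrank_eq
    rw [← Matrix.rank, h]
    simp
  exact hN.not_isUnit hunit

/-- An invertible matrix of positive size is conjugate to one with nonzero top left entry. -/
theorem Matrix.exists_conj_apply_zero_ne_zero {k : ℕ} {A : Matrix (Fin (1 + k)) (Fin (1 + k)) F}
    (hA : IsUnit A) (z : Fin (1 + k)) :
    ∃ P Q : Matrix (Fin (1 + k)) (Fin (1 + k)) F, P * Q = 1 ∧ (P * A * Q) z z ≠ 0 := by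
  by_cases hz : A z z = 0
  · obtain ⟨j, hj⟩ : ∃ j, A z j ≠ 0 := by
      by_contra! hrow
      exact ((Matrix.isUnit_iff_isUnit_det A).1 hA).ne_zero (Matrix.det_eq_zero_of_row_eq_zero z hrow)
    have hjz : j ≠ z := by
      rintro rfl
      exact hj hz
    refine ⟨transvection j z (-1), transvection j z 1, ?_, ?_⟩
    · rw [transvection_mul_transvection_same _ _ hjz]
      simp
    · rw [mul_transvection_apply_same, transvection_mul_apply_of_ne _ _ _ _ hjz.symm,
        transvection_mul_apply_of_ne _ _ _ _ hjz.symm, hz]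
      simpa using hj
  · exact ⟨1, 1, by simp, by simpa using hz⟩

/-- Every invertible matrix is conjugate to a product of a lower and an upper triangular matrix. -/
theorem Matrix.exists_conj_eq_lower_mul_upper (k : ℕ) (A : Matrix (Fin k) (Fin k) F)
    (hA : IsUnit A) :
    ∃ P Q L U : Matrix (Fin k) (Fin k) F, P * Q = 1 ∧ A = Q * (L * U) * P ∧
      (∀ i j, i < j → L i j = 0) ∧ ∀ i j, j < i → U i j = 0 := by
  induction k with
  | zero => exact ⟨1, 1, 1, 1, by simp, Subsingleton.elim _ _, fun i => i.elim0, fun i => i.elim0⟩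
  | succ k ih =>
    revert A
    rw [add_comm k 1]
    intro A hA
    let e : Fin 1 ⊕ Fin k ≃ Fin (1 + k) := finSumFinEquiv
    obtain ⟨P₀, Q₀, hPQ₀, hne⟩ := exists_conj_apply_zero_ne_zero hA (e (Sum.inl 0))
    have hQP₀ : Q₀ * P₀ = 1 := mul_eq_one_comm.1 hPQ₀
    let B : Matrix (Fin 1 ⊕ Fin k) (Fin 1 ⊕ Fin k) F := (P₀ * A * Q₀).submatrix e e
    have hB : IsUnit B.det := by
      have hdet : B.det = A.det := by
        have h1 : P₀.det * Q₀.det = 1 := by rw [← det_mul, hPQ₀, det_one]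
        rw [det_submatrix_equiv_self, det_mul, det_mul, mul_right_comm, h1, one_mul]
      rw [hdet]
      exact (isUnit_iff_isUnit_det A).1 hA
    have ha : IsUnit B.toBlocks₁₁.det := by
      rw [isUnit_iff_ne_zero]
      simpa [toBlocks₁₁, B] using hne
    let _ := invertibleOfIsUnitDet _ ha
    obtain ⟨P, Q, L, U, hPQ, hS, hL, hU⟩ :=
      ih (B.toBlocks₂₂ - B.toBlocks₂₁ * ⅟B.toBlocks₁₁ * B.toBlocks₁₂) (by
        rw [isUnit_iff_isUnit_det]
        rw [← B.fromBlocks_toBlocks, det_fromBlocks₁₁] at hB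
        exact (IsUnit.mul_iff.1 hB).2)
    have hQP : Q * P = 1 := mul_eq_one_comm.1 hPQ
    let L' := fromBlocks (1 : Matrix (Fin 1) (Fin 1) F) 0 (P * B.toBlocks₂₁ * ⅟B.toBlocks₁₁) L
    let U' := fromBlocks B.toBlocks₁₁ (B.toBlocks₁₂ * Q) 0 U
    let P' := fromBlocks (1 : Matrix (Fin 1) (Fin 1) F) 0 0 P
    let Q' := fromBlocks (1 : Matrix (Fin 1) (Fin 1) F) 0 0 Q
    have hPQ' : P' * Q' = 1 := by simp [P', Q', fromBlocks_multiply, hPQ]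
    have hBeq : B = Q' * (L' * U') * P' := by
      rw [← B.fromBlocks_toBlocks]
      simp only [L', U', P', Q', fromBlocks_multiply]
      simp only [Matrix.one_mul, Matrix.mul_one, Matrix.zero_mul, Matrix.mul_zero, add_zero,
        zero_add, Matrix.mul_add, Matrix.add_mul]
      congr 1
      · rw [Matrix.mul_assoc, hQP, Matrix.mul_one]
      · rw [Matrix.mul_assoc (P * _), invOf_mul_self, Matrix.mul_one, ← Matrix.mul_assoc, hQP, Matrix.one_mul]
      · rw [← hS]
        have h2 : Q * (P * B.toBlocks₂₁ * ⅟B.toBlocks₁₁ * (B.toBlocks₁₂ * Q)) * P =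
            (Q * P) * (B.toBlocks₂₁ * ⅟B.toBlocks₁₁ * B.toBlocks₁₂) * (Q * P) := by
          simp only [Matrix.mul_assoc]
        rw [h2, hQP, Matrix.one_mul, Matrix.mul_one]
        abel
    have hsub : P₀ * A * Q₀ = B.submatrix e.symm e.symm := by simp [B]
    refine ⟨P'.submatrix e.symm e.symm * P₀, Q₀ * Q'.submatrix e.symm e.symm,
      L'.submatrix e.symm e.symm, U'.submatrix e.symm e.symm, ?_, ?_, ?_, ?_⟩
    · rw [Matrix.mul_assoc, ← Matrix.mul_assoc P₀, hPQ₀, Matrix.one_mul, submatrix_mul_equiv, hPQ',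
        submatrix_one_equiv]
    · have hA' : A = Q₀ * (P₀ * A * Q₀) * P₀ := by
        have h3 : Q₀ * (P₀ * A * Q₀) * P₀ = (Q₀ * P₀) * A * (Q₀ * P₀) := by
          simp only [Matrix.mul_assoc]
        rw [h3, hQP₀, Matrix.one_mul, Matrix.mul_one]
      rw [hA', hsub, hBeq]
      simp only [← submatrix_mul_equiv _ _ _ e.symm _, Matrix.mul_assoc]
    · intro i j
      obtain ⟨i, rfl⟩ := e.surjective i
      obtain ⟨j, rfl⟩ := e.surjective j
      rcases i with i | i <;> rcases j with j | j <;> intro hij <;>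
        rw [Fin.lt_def] at hij <;> simp [e, L'] at hij ⊢
      exact hL _ _ hij
    · intro i j
      obtain ⟨i, rfl⟩ := e.surjective i
      obtain ⟨j, rfl⟩ := e.surjective j
      rcases i with i | i <;> rcases j with j | j <;> intro hij <;>
        rw [Fin.lt_def] at hij <;> simp [e, U'] at hij ⊢
      exact hU _ _ hij


end

/-- For `n ≥ 2` (here `n = k + 1` with `k ≥ 1`) and `A₁` an invertible
`(n-1) × (n-1)` matrix, the block diagonal matrix `Dg[0₁, A₁]` is a product of two
nilpotent `n × n` matrices, each of rank `n - 1`. -/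
theorem zero_block_invertible_product_of_nilpotents
    (F : Type*) [Field F] (k : ℕ) (hk : 0 < k)
    (A₁ : Matrix (Fin k) (Fin k) F) (hA₁ : IsUnit A₁) :
    ∃ N₁ N₂ : Matrix (Fin (1 + k)) (Fin (1 + k)) F,
      IsNilpotent N₁ ∧ IsNilpotent N₂ ∧
      Matrix.reindex finSumFinEquiv finSumFinEquiv
          (Matrix.fromBlocks (0 : Matrix (Fin 1) (Fin 1) F) 0 0 A₁) = N₁ * N₂ ∧
      N₁.rank = k ∧ N₂.rank = k := by
  obtain ⟨P, Q, L, U, hPQ, hA, hL, hU⟩ := Matrix.exists_conj_eq_lower_mul_upper k A₁ hA₁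
  let e : Fin 1 ⊕ Fin k ≃ Fin (1 + k) := finSumFinEquiv
  let e' : Fin k ⊕ Fin 1 ≃ Fin (1 + k) := finSumFinEquiv.trans (finCongr (add_comm k 1))
  let M₁ : Matrix (Fin (1 + k)) (Fin (1 + k)) F :=
    (fromBlocks 0 0 L 0 : Matrix (Fin 1 ⊕ Fin k) (Fin k ⊕ Fin 1) F).submatrix e.symm e'.symm
  let M₂ : Matrix (Fin (1 + k)) (Fin (1 + k)) F :=
    (fromBlocks 0 U 0 0 : Matrix (Fin k ⊕ Fin 1) (Fin 1 ⊕ Fin k) F).submatrix e'.symm e.symm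
  let P' := (fromBlocks (1 : Matrix (Fin 1) (Fin 1) F) 0 0 P).submatrix e.symm e.symm
  let Q' := (fromBlocks (1 : Matrix (Fin 1) (Fin 1) F) 0 0 Q).submatrix e.symm e.symm
  have hPQ' : P' * Q' = 1 := by simp [P', Q', submatrix_mul_equiv, fromBlocks_multiply, hPQ]
  have hM₁ : IsNilpotent M₁ := by
    apply Matrix.isNilpotent_of_strictly_lower
    intro i j
    obtain ⟨i, rfl⟩ := e.surjective i
    obtain ⟨j, rfl⟩ := e'.surjective j
    simp only [M₁, submatrix_apply, Equiv.symm_apply_apply]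
    rcases i with i | i <;> rcases j with j | j <;> intro hij <;>
      simp [e, e', Fin.le_def] at hij ⊢
    exact hL _ _ (by rw [Fin.lt_def]; omega)
  have hM₂ : IsNilpotent M₂ := by
    apply Matrix.isNilpotent_of_strictly_upper
    intro i j
    obtain ⟨i, rfl⟩ := e'.surjective i
    obtain ⟨j, rfl⟩ := e.surjective j
    simp only [M₂, submatrix_apply, Equiv.symm_apply_apply]
    rcases i with i | i <;> rcases j with j | j <;> intro hij <;>
      simp [e, e', Fin.le_def] at hij ⊢
    exact hU _ _ (by rw [Fin.lt_def]; omega)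
  have hprod : Matrix.reindex finSumFinEquiv finSumFinEquiv
      (Matrix.fromBlocks (0 : Matrix (Fin 1) (Fin 1) F) 0 0 A₁) =
        (Q' * M₁ * P') * (Q' * M₂ * P') := by
    have hmid : (Q' * M₁ * P') * (Q' * M₂ * P') = Q' * (M₁ * M₂) * P' := by
      rw [Matrix.mul_assoc (Q' * M₁), ← Matrix.mul_assoc P', ← Matrix.mul_assoc P', hPQ']
      simp only [Matrix.one_mul, Matrix.mul_assoc]
    rw [hmid]
    simp only [Q', M₁, M₂, P', submatrix_mul_equiv, fromBlocks_multiply, reindex_apply]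
    simp [hA, e]
  have hrank : k ≤ (Matrix.reindex finSumFinEquiv finSumFinEquiv
      (Matrix.fromBlocks (0 : Matrix (Fin 1) (Fin 1) F) 0 0 A₁)).rank := by
    rw [rank_reindex]
    calc k = A₁.rank := by simp [rank_of_isUnit A₁ hA₁]
      _ = ((fromBlocks (0 : Matrix (Fin 1) (Fin 1) F) 0 0 A₁).submatrix Sum.inr Sum.inr).rank := rfl
      _ ≤ _ := rank_submatrix_le _ _ _
  have hN₁ := hM₁.conj_of_mul_eq_one hPQ'
  have hN₂ := hM₂.conj_of_mul_eq_one hPQ'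
  have : NeZero (1 + k) := ⟨by omega⟩
  have hlt₁ := Matrix.rank_lt_of_isNilpotent hN₁
  have hlt₂ := Matrix.rank_lt_of_isNilpotent hN₂
  rw [hprod] at hrank
  have hle₁ := hrank.trans (rank_mul_le_left _ _)
  have hle₂ := hrank.trans (rank_mul_le_right _ _)
  exact ⟨_, _, hN₁, hN₂, hprod, by omega, by omega⟩
end

section
/- Let F be a field, let A₀ be an m×m matrix over F whose first row is the zero vector, let A₁ be an invertible k×k matrix over F, and let B be a k×m matrix over F all of whose columns except possibly the first are zero. Then there exists a k×m matrix X over F with B = X·A₀ − A₁·X; consequently the (m+k)×(m+k) block lower triangular matrix with diagonal blocks A₀, A₁ and lower-left block B is similar to Dg[A₀, A₁]. -/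
/-- If every column of `B` other than column `i₀` is zero and row `i₀` of `A` is zero, then
`B * A = 0`. -/
theorem Matrix.mul_eq_zero_of_col_of_row {R l m n : Type*} [NonUnitalNonAssocSemiring R]
    [Fintype m] {B : Matrix l m R} {A : Matrix m n R} (i₀ : m)
    (hB : ∀ i j, j ≠ i₀ → B i j = 0) (hA : ∀ j, A i₀ j = 0) : B * A = 0 := by
  ext i j
  rw [Matrix.mul_apply, Matrix.zero_apply]
  refine Finset.sum_eq_zero fun x _ => ?_
  by_cases hx : x = i₀
  · rw [hx, hA, mul_zero]
  · rw [hB i x hx, zero_mul]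

/-- A solution of the Sylvester equation block-diagonalizes the block lower triangular matrix. -/
theorem Matrix.fromBlocks_mul_unitriangular_of_sylvester {R m n : Type*} [Ring R]
    [Fintype m] [Fintype n] [DecidableEq m] [DecidableEq n]
    {A₀ : Matrix m m R} {A₁ : Matrix n n R} {B X : Matrix n m R} (h : B = X * A₀ - A₁ * X) :
    Matrix.fromBlocks A₀ 0 B A₁ * Matrix.fromBlocks 1 0 X 1 =
      Matrix.fromBlocks 1 0 X 1 * Matrix.fromBlocks A₀ 0 0 A₁ := by
  simp [Matrix.fromBlocks_multiply, h]

/-- Let `A₀` be an `m × m` matrix whose first row is zero, `A₁` an invertible `k × k`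
matrix, and `B` a `k × m` matrix all of whose columns except possibly the first are
zero. Then the Sylvester equation `B = X * A₀ - A₁ * X` has a solution `X`;
consequently the block lower triangular matrix with diagonal blocks `A₀`, `A₁` and
lower-left block `B` is similar to `Dg[A₀, A₁]`. -/
theorem sylvester_solution_first_column
    (F : Type*) [Field F] (m k : ℕ) (hm : 0 < m)
    (A₀ : Matrix (Fin m) (Fin m) F) (hA₀ : ∀ j, A₀ ⟨0, hm⟩ j = 0)
    (A₁ : Matrix (Fin k) (Fin k) F) (hA₁ : IsUnit A₁)
    (B : Matrix (Fin k) (Fin m) F) (hB : ∀ (i : Fin k) (j : Fin m), (j : ℕ) ≠ 0 → B i j = 0) :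
    (∃ X : Matrix (Fin k) (Fin m) F, B = X * A₀ - A₁ * X) ∧
      ∃ S : Matrix (Fin (m + k)) (Fin (m + k)) F,
        IsUnit S ∧
        S⁻¹ * Matrix.reindex finSumFinEquiv finSumFinEquiv
              (Matrix.fromBlocks A₀ 0 B A₁) * S =
          Matrix.reindex finSumFinEquiv finSumFinEquiv
            (Matrix.fromBlocks A₀ 0 0 A₁) := by
  have hdet : IsUnit A₁.det := (Matrix.isUnit_iff_isUnit_det A₁).mp hA₁
  have hBA : B * A₀ = 0 := Matrix.mul_eq_zero_of_col_of_row ⟨0, hm⟩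
    (fun i j hj => hB i j fun h => hj (Fin.ext h)) hA₀
  have hX : B = -(A₁⁻¹ * B) * A₀ - A₁ * -(A₁⁻¹ * B) := by
    rw [Matrix.neg_mul, Matrix.mul_assoc, hBA, Matrix.mul_neg,
      Matrix.mul_nonsing_inv_cancel_left _ _ hdet]
    simp
  refine ⟨⟨_, hX⟩, Matrix.reindex finSumFinEquiv finSumFinEquiv
    (Matrix.fromBlocks 1 0 (-(A₁⁻¹ * B)) 1), ?_⟩
  have hS : IsUnit (Matrix.reindex finSumFinEquiv finSumFinEquiv
      (Matrix.fromBlocks 1 0 (-(A₁⁻¹ * B)) 1)).det := by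
    rw [Matrix.det_reindex_self, Matrix.det_fromBlocks_zero₁₂]
    simp
  refine ⟨(Matrix.isUnit_iff_isUnit_det _).mpr hS, ?_⟩
  rw [Matrix.mul_assoc, ← Matrix.coe_reindexLinearEquiv F F,
    Matrix.reindexLinearEquiv_mul, Matrix.fromBlocks_mul_unitriangular_of_sylvester hX,
    ← Matrix.reindexLinearEquiv_mul F F _ finSumFinEquiv]
  exact Matrix.nonsing_inv_mul_cancel_left _ _ hS
end
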